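/- Let A ∈ 𝓡 be a fixed set, X a random vector in [0,∞)^d with distribution F, and Θ a nonnegative random variable not degenerate at 0. Suppose the pair (X, Θ) satisfies Assumption CD_A and Assumption B_A. Then for each class 𝓑 ∈ {𝓒, 𝓓, 𝓓∩𝓛, 𝓢, 𝓛, 𝓟𝓓, 𝓓∩𝓟𝓓, 𝓐, 𝓣, 𝓓∩𝓐}: if F ∈ 𝓑_A, then the distribution G of the scale mixture ΘX = (ΘX_1, …, ΘX_d) also belongs to 𝓑_A. -/

import Mathlib

open MeasureTheory ProbabilityTheory Filter Topology
open scoped Pointwise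

namespace Paper

variable {d : ℕ} {Ω : Type*} [MeasurableSpace Ω]

/-- The family `𝓡` of open, increasing sets with convex complement, bounded away from `0`. -/
structure IsRSet (d : ℕ) (A : Set (Fin d → ℝ)) : Prop where
  isOpen : IsOpen A
  increasing : ∀ u ∈ A, ∀ v : Fin d → ℝ, (∀ i, 0 ≤ v i) → u + v ∈ A
  convex_compl : Convex ℝ Aᶜ
  zero_notMem_closure : (0 : Fin d → ℝ) ∉ closure A

/-- `Y_A(z) = sup { u > 0 : z ∈ u A }`. -/
noncomputable def suprA (A : Set (Fin d → ℝ)) (z : Fin d → ℝ) : ℝ :=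
  sSup {u : ℝ | 0 < u ∧ z ∈ u • A}

/-- `F_A`, the distribution of `Y_A = suprA A ∘ X` under `P`. -/
noncomputable def FA (P : Measure Ω) (A : Set (Fin d → ℝ)) (X : Ω → Fin d → ℝ) :
    Measure ℝ :=
  P.map (fun ω => suprA A (X ω))

/-- `F (x A) = P[X ∈ x A]` as a real number. -/
noncomputable def vTail (P : Measure Ω) (A : Set (Fin d → ℝ)) (X : Ω → Fin d → ℝ)
    (x : ℝ) : ℝ :=
  (P {ω | X ω ∈ x • A}).toReal

/-- Tail `ν(x, ∞)` of a measure on `ℝ`, as a real number. -/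
noncomputable def mTail (ν : Measure ℝ) (x : ℝ) : ℝ := (ν (Set.Ioi x)).toReal

/-- Convolution of two measures on `ℝ`. -/
noncomputable def mConv (μ ν : Measure ℝ) : Measure ℝ :=
  (μ.prod ν).map (fun p => p.1 + p.2)

/-- `n`-fold convolution power. -/
noncomputable def mConvN (ν : Measure ℝ) : ℕ → Measure ℝ
  | 0 => Measure.dirac 0
  | n + 1 => mConv (mConvN ν n) ν

/-- Long-tailed class `𝓛`. -/
def MemL (ν : Measure ℝ) : Prop :=
  ∀ a : ℝ, 0 < a → Tendsto (fun x => mTail ν (x - a) / mTail ν x) atTop (𝓝 1)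

/-- Subexponential class `𝓢`. -/
def MemS (ν : Measure ℝ) : Prop :=
  Tendsto (fun x => mTail (mConv ν ν) x / mTail ν x) atTop (𝓝 2)

/-- Dominatedly varying class `𝓓`. -/
def MemD (ν : Measure ℝ) : Prop :=
  ∀ y : ℝ, 0 < y → y < 1 → ∃ C : ℝ, ∀ᶠ x in atTop, mTail ν (y * x) / mTail ν x ≤ C

/-- Positively decreasing class `𝓟𝓓`. -/
def MemPD (ν : Measure ℝ) : Prop :=
  ∀ b : ℝ, 1 < b → ∃ c : ℝ, c < 1 ∧ ∀ᶠ x in atTop, mTail ν (b * x) / mTail ν x ≤ c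

/-- Consistently varying class `𝓒`. -/
def MemC (ν : Measure ℝ) : Prop :=
  Tendsto (fun b : ℝ => Filter.liminf (fun x => mTail ν (b * x) / mTail ν x) atTop)
    (nhdsWithin 1 (Set.Ioi 1)) (𝓝 1)

/-- `𝓐 = 𝓢 ∩ 𝓟𝓓`. -/
def MemA (ν : Measure ℝ) : Prop := MemS ν ∧ MemPD ν

/-- `𝓣 = 𝓛 ∩ 𝓟𝓓`. -/
def MemT (ν : Measure ℝ) : Prop := MemL ν ∧ MemPD ν

/-- Regular variation of index `-α` of the tail of `ν`. -/
def MemRV (ν : Measure ℝ) (α : ℝ) : Prop :=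
  ∀ t : ℝ, 0 < t → Tendsto (fun x => mTail ν (t * x) / mTail ν x) atTop (𝓝 (t ^ (-α)))

/-- Weak tail-equivalence `f ≍ g`. -/
def WeakTailEquiv (f g : ℝ → ℝ) : Prop :=
  ∃ c₁ c₂ : ℝ, 0 < c₁ ∧ ∀ᶠ x in atTop, c₁ * g x ≤ f x ∧ f x ≤ c₂ * g x

/-- (Standard) multivariate regular variation `F ∈ MRV(α, V, μ)` of the distribution of `X`. -/
structure IsMRV (P : Measure Ω) (X : Ω → Fin d → ℝ) (α : ℝ) (V : Measure ℝ)
    (μ : Measure (Fin d → ℝ)) : Prop where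
  alpha_pos : 0 < α
  V_prob : IsProbabilityMeasure V
  V_rv : MemRV V α
  mu_ne_zero : ∃ B : Set (Fin d → ℝ), (0 : Fin d → ℝ) ∉ closure B ∧ 0 < μ B
  mu_radon : ∀ B : Set (Fin d → ℝ), (0 : Fin d → ℝ) ∉ closure B → μ B ≠ ⊤
  tendsto : ∀ B : Set (Fin d → ℝ), MeasurableSet B → (0 : Fin d → ℝ) ∉ closure B →
    μ (frontier B) = 0 →
    Tendsto (fun x => vTail P B X x / mTail V x) atTop (𝓝 ((μ B).toReal))

/-- Support of a distribution on `ℝ`. -/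
def measSupport (ν : Measure ℝ) : Set ℝ := {t | ∀ U ∈ 𝓝 t, 0 < ν U}

/-- Assumption `CD_A`: conditional dependence of `(X, Θ)` on `A` with transfer function `h`:
`P[Y_A > x | Θ = t] ~ h(t) P[Y_A > x]` uniformly on the support of the distribution of `Θ`. -/
def CDA (P : Measure Ω) [IsFiniteMeasure P] (A : Set (Fin d → ℝ))
    (X : Ω → Fin d → ℝ) (Θ : Ω → ℝ) (h : ℝ → ℝ) : Prop :=
  ∀ ε : ℝ, 0 < ε → ∀ᶠ x in atTop, ∀ t ∈ measSupport (P.map Θ),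
    |((condDistrib (fun ω => suprA A (X ω)) Θ P) t (Set.Ioi x)).toReal /
        (h t * (P {ω | x < suprA A (X ω)}).toReal) - 1| ≤ ε

/-- Assumption `B_A`: `P[Θ > c x] = o(P[Θ Y_A > x])` for all `c > 0`. -/
def BA (P : Measure Ω) (A : Set (Fin d → ℝ)) (X : Ω → Fin d → ℝ) (Θ : Ω → ℝ) : Prop :=
  ∀ c : ℝ, 0 < c →
    Tendsto (fun x => (P {ω | c * x < Θ ω}).toReal /
      (P {ω | x < Θ ω * suprA A (X ω)}).toReal) atTop (𝓝 0)

/-- Assumption `B_A` in the form `P[Θ > c x] = o(P[Θ X ∈ x A])` for all `c > 0`. -/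
def BA' (P : Measure Ω) (A : Set (Fin d → ℝ)) (X : Ω → Fin d → ℝ) (Θ : Ω → ℝ) : Prop :=
  ∀ c : ℝ, 0 < c →
    Tendsto (fun x => (P {ω | c * x < Θ ω}).toReal /
      (P {ω | Θ ω • X ω ∈ x • A}).toReal) atTop (𝓝 0)

section Aux
open Set
open scoped ENNReal

/-- product law -/
noncomputable def pm (G F : Measure ℝ) : Measure ℝ := (G.prod F).map (fun p => p.1 * p.2)

instance (G F : Measure ℝ) [IsFiniteMeasure G] [IsFiniteMeasure F] : IsFiniteMeasure (pm G F) := by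
  unfold pm; infer_instance

lemma meas_tail (F : Measure ℝ) : Measurable (fun z => F (Ioi z)) := by
  apply Antitone.measurable
  intro a b hab
  exact measure_mono (Ioi_subset_Ioi hab)

lemma meas_tail_div (F : Measure ℝ) (x : ℝ) : Measurable (fun t => F (Ioi (x / t))) :=
  (meas_tail F).comp (by fun_prop)

lemma ae_pos {G : Measure ℝ} (hG : G (Iic 0) = 0) : ∀ᵐ t ∂G, 0 < t := by
  rw [ae_iff]
  convert hG using 2
  ext t; simp

lemma pm_tail (G F : Measure ℝ) [IsFiniteMeasure G] [IsFiniteMeasure F]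
    (hG : G (Iic 0) = 0) (x : ℝ) :
    pm G F (Ioi x) = ∫⁻ t, F (Ioi (x / t)) ∂G := by
  have hm : Measurable (fun p : ℝ × ℝ => p.1 * p.2) := by fun_prop
  rw [pm, Measure.map_apply hm measurableSet_Ioi, Measure.prod_apply (hm measurableSet_Ioi)]
  apply lintegral_congr_ae
  filter_upwards [ae_pos hG] with t ht
  congr 1
  ext y
  simp only [div_lt_iff₀' ht, mem_Ioi, mem_preimage, mem_ofPred_eq]

/-- The ENNReal version of Assumption B. -/
def BC (G H : Measure ℝ) : Prop :=
  ∀ c : ℝ, 0 < c → ∀ ε : ℝ≥0∞, ε ≠ 0 → ∀ᶠ x in atTop, G (Ioi (c * x)) ≤ ε * H (Ioi x)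

lemma scale_lemma (G F : Measure ℝ) [IsFiniteMeasure G] [IsProbabilityMeasure F]
    (hG : G (Iic 0) = 0) (hB : BC G (pm G F)) (b : ℝ) (c : ℝ≥0∞)
    (hF : ∀ᶠ z in atTop, F (Ioi (b * z)) ≤ c * F (Ioi z)) (ε : ℝ≥0∞) (hε : ε ≠ 0) :
    ∀ᶠ x in atTop, pm G F (Ioi (b * x)) ≤ (c + ε) * pm G F (Ioi x) := by
  obtain ⟨z1, hz1⟩ := eventually_atTop.1 hF
  set z0 := max z1 1
  have hz0 : 0 < z0 := lt_of_lt_of_le one_pos (le_max_right _ _)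
  filter_upwards [hB (1 / z0) (by positivity) ε hε, eventually_gt_atTop 0] with x hx hx0
  rw [add_mul]
  refine le_trans ?_ (add_le_add_right hx _)
  rw [pm_tail G F hG, pm_tail G F hG, ← lintegral_const_mul _ (meas_tail_div F x),
    ← lintegral_indicator_one measurableSet_Ioi,
    ← lintegral_add_right _ (measurable_one.indicator measurableSet_Ioi)]
  apply lintegral_mono_ae
  filter_upwards [ae_pos hG] with t ht
  by_cases h : 1 / z0 * x < t
  · rw [indicator_of_mem (show t ∈ Ioi (1 / z0 * x) from h)]
    exact le_trans prob_le_one (by simp)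
  · refine le_trans ?_ le_self_add
    rw [mul_div_assoc]
    apply hz1
    push Not at h
    refine (le_max_left z1 1).trans ?_
    rw [le_div_iff₀ ht]
    calc z0 * t ≤ z0 * (1 / z0 * x) := by gcongr
      _ = x := by field_simp

/-- long tailed -/
def LC (ν : Measure ℝ) : Prop :=
  ∀ a : ℝ, 0 < a → ∀ ε : ℝ≥0∞, ε ≠ 0 → ∀ᶠ x in atTop, ν (Ioi (x - a)) ≤ (1 + ε) * ν (Ioi x)

lemma exists_Ici_pos (G : Measure ℝ) (h : G (Ioi 0) ≠ 0) : ∃ t : ℝ, 0 < t ∧ G (Ici t) ≠ 0 := by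
  by_contra hc
  push Not at hc
  apply h
  have : Ioi (0 : ℝ) ⊆ ⋃ n : ℕ, Ici (1 / ((n : ℝ) + 1)) := by
    intro t ht
    obtain ⟨n, hn⟩ := exists_nat_one_div_lt (show (0 : ℝ) < t from ht)
    exact mem_iUnion.2 ⟨n, hn.le⟩
  refine measure_mono_null this ?_
  rw [measure_iUnion_null_iff]
  intro n
  exact hc _ (by positivity)

lemma exists_Iio_small (G : Measure ℝ) [IsFiniteMeasure G] (h : G (Iic 0) = 0) (t1 : ℝ) (ht1 : 0 < t1)
    (η : ℝ≥0∞) (hη : η ≠ 0) : ∃ t : ℝ, 0 < t ∧ t ≤ t1 ∧ G (Iio t) ≤ η := by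
  have hT := tendsto_measure_iInter_atTop (μ := G) (s := fun n : ℕ => Iio (1 / ((n : ℝ) + 1)))
    (fun n => measurableSet_Iio.nullMeasurableSet)
    (fun m n hmn => Iio_subset_Iio (by gcongr)) ⟨0, measure_ne_top _ _⟩
  have hi : ⋂ n : ℕ, Iio (1 / ((n : ℝ) + 1)) = Iic 0 := by
    ext t
    simp only [mem_iInter, mem_Iio, mem_Iic]
    constructor
    · intro ht
      by_contra hc
      push Not at hc
      obtain ⟨n, hn⟩ := exists_nat_one_div_lt hc
      exact absurd (ht n) (by linarith)
    · intro ht n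
      exact ht.trans_lt (by positivity)
  rw [hi, h] at hT
  obtain ⟨n, hn⟩ := (hT.eventually_lt_const (pos_iff_ne_zero.2 hη)).exists
  refine ⟨min t1 (1 / ((n : ℝ) + 1)), by positivity, min_le_left _ _, ?_⟩
  exact (measure_mono (Iio_subset_Iio (min_le_right _ _))).trans hn.le

lemma exists_Ioi_small (G : Measure ℝ) [IsFiniteMeasure G] (t1 : ℝ)
    (η : ℝ≥0∞) (hη : η ≠ 0) : ∃ t : ℝ, 0 < t ∧ t1 ≤ t ∧ G (Ioi t) ≤ η := by
  have hT := tendsto_measure_iInter_atTop (μ := G) (s := fun n : ℕ => Ioi (n : ℝ))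
    (fun n => measurableSet_Ioi.nullMeasurableSet)
    (fun m n hmn => Ioi_subset_Ioi (by exact_mod_cast hmn)) ⟨0, measure_ne_top _ _⟩
  have hi : ⋂ n : ℕ, Ioi (n : ℝ) = ∅ := by
    ext t
    simp only [mem_iInter, mem_Ioi, mem_empty_iff_false, iff_false, not_forall, not_lt]
    exact exists_nat_ge t
  rw [hi, measure_empty] at hT
  obtain ⟨n, hn⟩ := (hT.eventually_lt_const (pos_iff_ne_zero.2 hη)).exists
  refine ⟨max (max t1 1) n, by positivity, (le_max_left _ _).trans (le_max_left _ _), ?_⟩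
  exact (measure_mono (Ioi_subset_Ioi (le_max_right _ _))).trans hn.le

lemma pm_tail_ge (G F : Measure ℝ) [IsFiniteMeasure G] [IsFiniteMeasure F]
    (hG : G (Iic 0) = 0) (x t0 : ℝ) (hx : 0 ≤ x) (ht0 : 0 < t0) :
    G (Ici t0) * F (Ioi (x / t0)) ≤ pm G F (Ioi x) := by
  rw [pm_tail G F hG, mul_comm, ← setLIntegral_const]
  refine le_trans (setLIntegral_mono (meas_tail_div F x) ?_) (setLIntegral_le_lintegral _ _)
  intro t ht
  apply measure_mono
  apply Ioi_subset_Ioi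
  exact div_le_div_of_nonneg_left hx ht0 ht

lemma LC_pm (G F : Measure ℝ) [IsFiniteMeasure G] [IsProbabilityMeasure F]
    (hG : G (Iic 0) = 0) (hG0 : G (Ioi 0) ≠ 0) (hB : BC G (pm G F)) (hF : LC F) :
    LC (pm G F) := by
  intro a ha ε hε
  obtain ⟨t1, ht1, hGt1⟩ := exists_Ici_pos G hG0
  set η : ℝ≥0∞ := min 1 (ε / 4)
  have hη : η ≠ 0 := by
    have : ε / 4 ≠ 0 := ENNReal.div_ne_zero.2 ⟨hε, by simp⟩
    exact (lt_min one_pos (pos_iff_ne_zero.2 this)).ne'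
  have hη1 : η ≤ 1 := min_le_left _ _
  have hη4 : 4 * η ≤ ε := by
    calc 4 * η ≤ 4 * (ε / 4) := by gcongr; exact min_le_right _ _
      _ = ε := ENNReal.mul_div_cancel (by simp) (by simp)
  obtain ⟨t0, ht0, ht01, hGt0⟩ := exists_Iio_small G hG t1 ht1 (η * G (Ici t1))
    (mul_ne_zero hη hGt1)
  have hGt0' : G (Iio t0) ≤ η * G (Ici t0) :=
    hGt0.trans (by gcongr)
  obtain ⟨z1, hz1⟩ := eventually_atTop.1 (hF (a / t0) (by positivity) η hη)
  set z0 := max z1 1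
  have hz0 : 0 < z0 := lt_of_lt_of_le one_pos (le_max_right _ _)
  filter_upwards [hB (1 / z0) (by positivity) η hη, eventually_gt_atTop 0,
    eventually_ge_atTop (t0 * z1), eventually_ge_atTop a] with x hx hx0 hx1 hxa
  have hge := pm_tail_ge G F hG x t0 hx0.le ht0
  have hmain : pm G F (Ioi (x - a)) ≤ (1 + η) * pm G F (Ioi x) + G (Ioi (1 / z0 * x))
      + ((1 + η) * F (Ioi (x / t0))) * G (Iio t0) := by
    rw [pm_tail G F hG, pm_tail G F hG, ← lintegral_const_mul _ (meas_tail_div F x),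
      ← lintegral_indicator_one measurableSet_Ioi,
      ← lintegral_indicator_const measurableSet_Iio,
      ← lintegral_add_right _ (measurable_one.indicator measurableSet_Ioi),
      ← lintegral_add_right _ (measurable_const.indicator measurableSet_Iio)]
    apply lintegral_mono_ae
    filter_upwards [ae_pos hG] with t ht
    by_cases h : 1 / z0 * x < t
    · rw [indicator_of_mem (show t ∈ Ioi (1 / z0 * x) from h)]
      refine le_trans prob_le_one ?_
      rw [add_right_comm]; simp
    by_cases h2 : t < t0
    · rw [indicator_of_mem (show t ∈ Iio t0 from h2)]
      refine le_trans ?_ le_add_self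
      refine le_trans (measure_mono (Ioi_subset_Ioi ?_)) (hz1 (x / t0) ?_)
      · rw [← sub_div]
        exact div_le_div_of_nonneg_left (by linarith) ht h2.le
      · rw [le_div_iff₀ ht0]; linarith
    · refine le_trans ?_ (le_self_add.trans le_self_add)
      push Not at h h2
      refine le_trans (measure_mono (Ioi_subset_Ioi ?_)) (hz1 (x / t) ?_)
      · rw [sub_div]
        have := div_le_div_of_nonneg_left ha.le ht0 h2
        linarith
      · refine (le_max_left z1 1).trans ?_
        rw [le_div_iff₀ ht]
        calc z0 * t ≤ z0 * (1 / z0 * x) := by gcongr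
          _ = x := by field_simp
  refine hmain.trans ?_
  set H := pm G F (Ioi x)
  calc (1 + η) * H + G (Ioi (1 / z0 * x)) + ((1 + η) * F (Ioi (x / t0))) * G (Iio t0)
      ≤ (1 + η) * H + η * H + ((1 + 1) * F (Ioi (x / t0))) * (η * G (Ici t0)) := by gcongr
    _ = (1 + η) * H + η * H + 2 * η * (G (Ici t0) * F (Ioi (x / t0))) := by ring
    _ ≤ (1 + η) * H + η * H + 2 * η * H := by gcongr
    _ = (1 + 4 * η) * H := by ring
    _ ≤ (1 + ε) * H := by gcongr

lemma prod4 (G F : Measure ℝ) [IsFiniteMeasure G] [IsFiniteMeasure F]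
    (S : Set ((ℝ × ℝ) × (ℝ × ℝ))) (hS : MeasurableSet S) :
    ((G.prod F).prod (G.prod F)) S =
      ∫⁻ s, ∫⁻ t, (F.prod F) {q | ((s, q.1), (t, q.2)) ∈ S} ∂G ∂G := by
  rw [Measure.prod_apply hS, lintegral_prod _ (measurable_measure_prodMk_left hS).aemeasurable]
  apply lintegral_congr
  intro s
  have h1 : ∀ y1 : ℝ, (G.prod F) (Prod.mk (s, y1) ⁻¹' S) =
      ∫⁻ t, F {y2 | ((s, y1), (t, y2)) ∈ S} ∂G := by
    intro y1
    rw [Measure.prod_apply (measurable_prodMk_left hS)]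
    rfl
  simp_rw [h1]
  have hT : MeasurableSet {r : (ℝ × ℝ) × ℝ | ((s, r.1.1), (r.1.2, r.2)) ∈ S} := by
    have : Measurable (fun r : (ℝ × ℝ) × ℝ => ((s, r.1.1), (r.1.2, r.2))) := by fun_prop
    exact this hS
  rw [lintegral_lintegral_swap]
  · apply lintegral_congr
    intro t
    have hT2 : MeasurableSet {q : ℝ × ℝ | ((s, q.1), (t, q.2)) ∈ S} := by
      have : Measurable (fun q : ℝ × ℝ => ((s, q.1), (t, q.2))) := by fun_prop
      exact this hS
    rw [Measure.prod_apply hT2]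
    rfl
  · exact (measurable_measure_prodMk_left hT).aemeasurable

/-- joint overshoot -/
noncomputable def J2 (μ ν : Measure ℝ) (K x : ℝ) : ℝ≥0∞ :=
  (μ.prod ν) {p | K < p.1 ∧ K < p.2 ∧ x < p.1 + p.2}

lemma J2_meas (K x : ℝ) : MeasurableSet {p : ℝ × ℝ | K < p.1 ∧ K < p.2 ∧ x < p.1 + p.2} := by
  apply (measurableSet_lt measurable_const measurable_fst).inter
  apply (measurableSet_lt measurable_const measurable_snd).inter
  exact measurableSet_lt measurable_const (measurable_fst.add measurable_snd)

/-- second half of the subexponentiality criterion -/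
def SC (ν : Measure ℝ) : Prop :=
  ∀ ε : ℝ≥0∞, ε ≠ 0 → ∃ K : ℝ, ∀ᶠ x in atTop, J2 ν ν K x ≤ ε * ν (Ioi x)

lemma J2_anti (μ ν : Measure ℝ) (K K' x : ℝ) (h : K ≤ K') : J2 μ ν K' x ≤ J2 μ ν K x := by
  apply measure_mono
  rintro p ⟨h1, h2, h3⟩
  exact ⟨h.trans_lt h1, h.trans_lt h2, h3⟩

lemma J2_pm (G F : Measure ℝ) [IsFiniteMeasure G] [IsFiniteMeasure F] (K x : ℝ) :
    J2 (pm G F) (pm G F) K x = ∫⁻ s, ∫⁻ t,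
      (F.prod F) {q | K < s * q.1 ∧ K < t * q.2 ∧ x < s * q.1 + t * q.2} ∂G ∂G := by
  have hm : Measurable (fun p : ℝ × ℝ => p.1 * p.2) := by fun_prop
  rw [J2, pm, Measure.map_prod_map _ _ hm hm, Measure.map_apply (hm.prodMap hm) (J2_meas K x),
    prod4 G F _ ((hm.prodMap hm) (J2_meas K x))]
  rfl

lemma phi_bound (F : Measure ℝ) [IsProbabilityMeasure F] (ε : ℝ≥0∞) (L0 t1 t2 δ z1 : ℝ)
    (hL0 : 0 < L0) (ht2 : 0 < t2) (ht12 : t2 ≤ t1) (hδ : 0 < δ) (hδL : δ * L0 ≤ 1 / 2)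
    (hδz : z1 * δ ≤ 1)
    (hJ : ∀ z, z1 ≤ z → J2 F F L0 z ≤ ε * F (Ioi z))
    (hL : ∀ z, z1 ≤ z → F (Ioi (z - L0)) ≤ 2 * F (Ioi z))
    (x s t : ℝ) (hx : 0 < x) (ht : 0 < t) (hts : t ≤ s) :
    (F.prod F) {q | t1 * L0 < s * q.1 ∧ t1 * L0 < t * q.2 ∧ x < s * q.1 + t * q.2} ≤
      (Ioi (δ * x)).indicator 1 s + ε * F (Ioi (x / s))
      + 4 * ((Ioi t2).indicator 1 t * F (Ioi (x / s)))
      + (Ioi t1).indicator 1 s * F (Ioi (x / (2 * t2))) := by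
  have hs : 0 < s := ht.trans_le hts
  by_cases hsx : δ * x < s
  · refine le_trans prob_le_one ?_
    rw [indicator_of_mem (show s ∈ Ioi (δ * x) from hsx)]
    simp only [Pi.one_apply, add_assoc]
    exact le_self_add
  push Not at hsx
  have hz : z1 ≤ x / s := by
    rw [le_div_iff₀ hs]
    rcases le_or_gt z1 0 with h | h
    · nlinarith
    · nlinarith
  set z := x / s
  have hsz : s * z = x := by simp only [z]; field_simp
  set E2 : Set (ℝ × ℝ) := {q | t1 < t ∧ z - L0 < q.1}
  set E3 : Set (ℝ × ℝ) := {q | t2 < t ∧ z - L0 < q.2}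
  set E4 : Set (ℝ × ℝ) := {q | t1 < s ∧ x / (2 * t2) < q.2}
  have hsub : {q : ℝ × ℝ | t1 * L0 < s * q.1 ∧ t1 * L0 < t * q.2 ∧ x < s * q.1 + t * q.2} ⊆
      {p | L0 < p.1 ∧ L0 < p.2 ∧ z < p.1 + p.2} ∪ E2 ∪ E3 ∪ E4 := by
    rintro ⟨y1, y2⟩ ⟨h1, h2, h3⟩
    simp only at h1 h2 h3
    have ht1 : 0 < t1 := ht2.trans_le ht12
    have hy2 : 0 < y2 := by
      by_contra hc; push Not at hc
      nlinarith [mul_pos ht1 hL0]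
    have hy1 : 0 < y1 := by
      by_contra hc; push Not at hc
      nlinarith [mul_pos ht1 hL0]
    have hsum : s * z < s * y1 + t * y2 := by rw [hsz]; exact h3
    have hty : t * y2 ≤ s * y2 := by gcongr
    rcases le_or_gt y2 L0 with hA | hA
    · left; left; right
      refine ⟨?_, ?_⟩
      · by_contra hc; push Not at hc
        nlinarith
      · have : s * y2 ≤ s * L0 := by gcongr
        have : s * (z - L0) < s * y1 := by nlinarith
        exact lt_of_mul_lt_mul_left this hs.le
    rcases le_or_gt y1 L0 with hC | hC
    · have h4 : s * y1 ≤ s * L0 := by gcongr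
      rcases lt_or_ge t2 t with hD | hD
      · left; right
        refine ⟨hD, ?_⟩
        have : s * (z - L0) < s * y2 := by nlinarith
        exact lt_of_mul_lt_mul_left this hs.le
      · right
        refine ⟨?_, ?_⟩
        · by_contra hc; push Not at hc
          nlinarith
        · rw [div_lt_iff₀ (by positivity)]
          have h5 : s * L0 ≤ δ * x * L0 := by gcongr
          have h6 : t * y2 ≤ t2 * y2 := by gcongr
          nlinarith
    · left; left; left
      refine ⟨hA |> fun _ => hC, hA, ?_⟩
      have : s * z < s * (y1 + y2) := by nlinarith
      exact lt_of_mul_lt_mul_left this hs.le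
  have hfst : ∀ a : ℝ, (F.prod F) {q : ℝ × ℝ | a < q.1} = F (Ioi a) := by
    intro a
    have : {q : ℝ × ℝ | a < q.1} = Ioi a ×ˢ univ := by ext; simp
    rw [this, Measure.prod_prod]; simp
  have hsnd : ∀ a : ℝ, (F.prod F) {q : ℝ × ℝ | a < q.2} = F (Ioi a) := by
    intro a
    have : {q : ℝ × ℝ | a < q.2} = univ ×ˢ Ioi a := by ext; simp
    rw [this, Measure.prod_prod]; simp
  have b1 : (F.prod F) {p | L0 < p.1 ∧ L0 < p.2 ∧ z < p.1 + p.2} ≤ ε * F (Ioi z) := hJ z hz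
  have b2 : (F.prod F) E2 ≤ 2 * ((Ioi t2).indicator 1 t * F (Ioi z)) := by
    by_cases h : t1 < t
    · rw [indicator_of_mem (show t ∈ Ioi t2 from ht12.trans_lt h)]
      simp only [E2, h, true_and, hfst, Pi.one_apply, one_mul]
      exact hL z hz
    · simp [E2, h]
  have b3 : (F.prod F) E3 ≤ 2 * ((Ioi t2).indicator 1 t * F (Ioi z)) := by
    by_cases h : t2 < t
    · rw [indicator_of_mem (show t ∈ Ioi t2 from h)]
      simp only [E3, h, true_and, hsnd, Pi.one_apply, one_mul]
      exact hL z hz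
    · simp [E3, h]
  have b4 : (F.prod F) E4 ≤ (Ioi t1).indicator 1 s * F (Ioi (x / (2 * t2))) := by
    by_cases h : t1 < s
    · rw [indicator_of_mem (show s ∈ Ioi t1 from h)]
      simp only [E4, h, true_and, hsnd, Pi.one_apply, one_mul]
      exact le_rfl
    · simp [E4, h]
  refine (measure_mono hsub).trans ?_
  refine (measure_union_le _ _).trans (add_le_add ?_ b4)
  calc _ ≤ ε * F (Ioi z) + 2 * ((Ioi t2).indicator 1 t * F (Ioi z))
        + 2 * ((Ioi t2).indicator 1 t * F (Ioi z)) :=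
        (measure_union_le _ _).trans (add_le_add ((measure_union_le _ _).trans (add_le_add b1 b2)) b3)
    _ = ε * F (Ioi z) + 4 * ((Ioi t2).indicator 1 t * F (Ioi z)) := by ring
    _ ≤ _ := by
      rw [add_assoc]; exact le_add_self

lemma phi_symm (F : Measure ℝ) [IsProbabilityMeasure F] (K x s t : ℝ) :
    (F.prod F) {q | K < s * q.1 ∧ K < t * q.2 ∧ x < s * q.1 + t * q.2} =
    (F.prod F) {q | K < t * q.1 ∧ K < s * q.2 ∧ x < t * q.1 + s * q.2} := by
  have hm : MeasurableSet {q : ℝ × ℝ | K < s * q.1 ∧ K < t * q.2 ∧ x < s * q.1 + t * q.2} := by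
    have h1 : Measurable (fun q : ℝ × ℝ => (s * q.1, t * q.2)) := by fun_prop
    exact h1 (J2_meas K x)
  rw [← Measure.prod_swap, Measure.map_apply measurable_swap hm]
  congr 1
  · rw [Measure.prod_swap]
  ext q
  simp only [mem_preimage, mem_ofPred_eq, Prod.fst_swap, Prod.snd_swap]
  rw [add_comm]
  tauto

lemma SC_pm (G F : Measure ℝ) [IsFiniteMeasure G] [IsProbabilityMeasure F]
    (hG : G (Iic 0) = 0) (hB : BC G (pm G F)) (hFL : LC F) (hF : SC F) :
    SC (pm G F) := by
  intro ε hε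
  set g := G univ
  have hg : g ≠ ⊤ := measure_ne_top _ _
  -- small constant
  obtain ⟨η, hη, hη2⟩ : ∃ η : ℝ≥0∞, η ≠ 0 ∧ η * (2 * (g + g + 4 + 1)) ≤ ε := by
    refine ⟨ε / (2 * (g + g + 4 + 1)), ENNReal.div_ne_zero.2 ⟨hε, ?_⟩, ?_⟩
    · exact ENNReal.mul_ne_top (by simp) (by simp [hg])
    · rw [ENNReal.div_mul_cancel (by simp) (ENNReal.mul_ne_top (by simp) (by simp [hg]))]
  obtain ⟨K0, hK0⟩ := hF η hη
  set L0 := max K0 1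
  have hL0 : 0 < L0 := lt_of_lt_of_le one_pos (le_max_right _ _)
  obtain ⟨z1, hz1⟩ := eventually_atTop.1 (hK0.and (hFL L0 hL0 1 one_ne_zero))
  obtain ⟨t2, ht2, -, hGt2⟩ := exists_Ioi_small G 0 η hη
  obtain ⟨t1, ht12, hGt1⟩ : ∃ t1, t2 ≤ t1 ∧ G (Ioi t1) * g ≤ η * G (Ici (2 * t2)) := by
    by_cases h0 : G (Ici (2 * t2)) = 0
    · refine ⟨2 * t2, by linarith, ?_⟩
      rw [measure_mono_null Ioi_subset_Ici_self h0]; simp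
    · have : η * G (Ici (2 * t2)) / (g + 1) ≠ 0 :=
        ENNReal.div_ne_zero.2 ⟨mul_ne_zero hη h0, by simp [hg]⟩
      obtain ⟨t1, -, ht12, hh⟩ := exists_Ioi_small G t2 _ this
      refine ⟨t1, ht12, ?_⟩
      calc G (Ioi t1) * g ≤ η * G (Ici (2 * t2)) / (g + 1) * (g + 1) := by
            gcongr; exact le_self_add
        _ = _ := ENNReal.div_mul_cancel (by simp) (by simp [hg])
  set δ : ℝ := min (1 / (2 * L0)) (1 / max z1 1)
  have hm1 : 0 < max z1 1 := by positivity
  have hδ : 0 < δ := by positivity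
  have hδL : δ * L0 ≤ 1 / 2 := by
    calc δ * L0 ≤ 1 / (2 * L0) * L0 := by gcongr; exact min_le_left _ _
      _ = 1 / 2 := by field_simp
  have hδz : z1 * δ ≤ 1 := by
    calc z1 * δ ≤ max z1 1 * δ := by gcongr; exact le_max_left _ _
      _ ≤ max z1 1 * (1 / max z1 1) := by gcongr; exact min_le_right _ _
      _ = 1 := by field_simp
  refine ⟨t1 * L0, ?_⟩
  filter_upwards [hB δ hδ η hη, eventually_gt_atTop 0] with x hx hx0
  set H := pm G F (Ioi x)
  set Ψ : ℝ → ℝ → ℝ≥0∞ := fun s t => (Ioi (δ * x)).indicator 1 s + η * F (Ioi (x / s))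
      + 4 * ((Ioi t2).indicator 1 t * F (Ioi (x / s)))
      + (Ioi t1).indicator 1 s * F (Ioi (x / (2 * t2)))
  have hind : ∀ a : ℝ, Measurable ((Ioi a).indicator (1 : ℝ → ℝ≥0∞)) := fun a =>
    measurable_one.indicator measurableSet_Ioi
  have hΨm : Measurable (Function.uncurry Ψ) := by
    have h1 := hind (δ * x)
    have h2 := hind t2
    have h3 := hind t1
    have h4 := meas_tail_div F x
    have e1 := h1.comp (measurable_fst : Measurable (Prod.fst : ℝ × ℝ → ℝ))
    have e2 := h2.comp (measurable_snd : Measurable (Prod.snd : ℝ × ℝ → ℝ))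
    have e3 := h3.comp (measurable_fst : Measurable (Prod.fst : ℝ × ℝ → ℝ))
    have e4 := h4.comp (measurable_fst : Measurable (Prod.fst : ℝ × ℝ → ℝ))
    exact ((e1.add (e4.const_mul η)).add ((e2.mul e4).const_mul 4)).add (e3.mul_const _)
  have hbd : ∀ s t : ℝ, 0 < s → 0 < t →
      (F.prod F) {q | t1 * L0 < s * q.1 ∧ t1 * L0 < t * q.2 ∧ x < s * q.1 + t * q.2} ≤
      Ψ s t + Ψ t s := by
    intro s t hs ht
    have hJ : ∀ z, z1 ≤ z → J2 F F L0 z ≤ η * F (Ioi z) := fun z hz =>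
      (J2_anti F F K0 L0 z (le_max_left _ _)).trans (hz1 z hz).1
    have hL : ∀ z, z1 ≤ z → F (Ioi (z - L0)) ≤ 2 * F (Ioi z) := fun z hz => by
      have := (hz1 z hz).2
      rwa [one_add_one_eq_two] at this
    rcases le_total t s with h | h
    · exact (phi_bound F η L0 t1 t2 δ z1 hL0 ht2 ht12 hδ hδL hδz hJ hL x s t hx0 ht h).trans
        le_self_add
    · rw [phi_symm]
      exact (phi_bound F η L0 t1 t2 δ z1 hL0 ht2 ht12 hδ hδL hδz hJ hL x t s hx0 hs h).trans
        le_add_self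
  have hΨ : ∫⁻ s, ∫⁻ t, Ψ s t ∂G ∂G ≤ η * (g + g + 4 + 1) * H := by
    have hin : ∀ s, ∫⁻ t, Ψ s t ∂G = (Ioi (δ * x)).indicator 1 s * g + η * g * F (Ioi (x / s))
        + 4 * G (Ioi t2) * F (Ioi (x / s))
        + (Ioi t1).indicator 1 s * (F (Ioi (x / (2 * t2))) * g) := by
      intro s
      simp only [Ψ]
      rw [lintegral_add_right _ measurable_const, lintegral_add_left measurable_const,
        lintegral_const, lintegral_const, lintegral_const_mul _ ((hind t2).mul_const _),
        lintegral_mul_const _ (hind t2), lintegral_indicator_one measurableSet_Ioi]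
      ring
    simp_rw [hin]
    have hF1 := meas_tail_div F x
    rw [lintegral_add_right _ ((hind t1).mul_const _), lintegral_add_right _ (hF1.const_mul _),
      lintegral_add_right _ (hF1.const_mul _), lintegral_mul_const _ (hind _),
      lintegral_mul_const _ (hind _), lintegral_const_mul _ hF1, lintegral_const_mul _ hF1,
      lintegral_indicator_one measurableSet_Ioi, lintegral_indicator_one measurableSet_Ioi,
      ← pm_tail G F hG]
    have hge := pm_tail_ge G F hG x (2 * t2) hx0.le (by linarith)
    calc _ ≤ (η * H) * g + η * g * H + 4 * η * H
          + (G (Ioi t1) * g) * F (Ioi (x / (2 * t2))) := by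
          refine add_le_add (by gcongr) (le_of_eq (by ring))
      _ ≤ (η * H) * g + η * g * H + 4 * η * H
          + (η * G (Ici (2 * t2))) * F (Ioi (x / (2 * t2))) := by gcongr
      _ = (η * H) * g + η * g * H + 4 * η * H
          + η * (G (Ici (2 * t2)) * F (Ioi (x / (2 * t2)))) := by ring
      _ ≤ (η * H) * g + η * g * H + 4 * η * H + η * H := by gcongr
      _ = _ := by ring
  rw [J2_pm]
  calc _ ≤ ∫⁻ s, ∫⁻ t, (Ψ s t + Ψ t s) ∂G ∂G := by
        apply lintegral_mono_ae
        filter_upwards [ae_pos hG] with s hs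
        apply lintegral_mono_ae
        filter_upwards [ae_pos hG] with t ht
        exact hbd s t hs ht
    _ = ∫⁻ s, ∫⁻ t, Ψ s t ∂G ∂G + ∫⁻ s, ∫⁻ t, Ψ t s ∂G ∂G := by
        have hmm : Measurable (fun s => ∫⁻ t, Ψ s t ∂G) := hΨm.lintegral_prod_right'
        rw [← lintegral_add_left hmm]
        apply lintegral_congr
        intro s
        exact lintegral_add_left (hΨm.comp measurable_prodMk_left) _
    _ = ∫⁻ s, ∫⁻ t, Ψ s t ∂G ∂G + ∫⁻ s, ∫⁻ t, Ψ s t ∂G ∂G := by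
        congr 1
        exact lintegral_lintegral_swap (f := fun s t => Ψ t s) (hΨm.comp measurable_swap).aemeasurable
    _ ≤ η * (g + g + 4 + 1) * H + η * (g + g + 4 + 1) * H := add_le_add hΨ hΨ
    _ = (η * (2 * (g + g + 4 + 1))) * H := by ring
    _ ≤ ε * H := by gcongr

lemma trans_lemma (H H' : Measure ℝ)
    (h1 : ∀ ε : ℝ≥0∞, ε ≠ 0 → ∀ᶠ x in atTop, H (Ioi x) ≤ (1 + ε) * H' (Ioi x))
    (h2 : ∀ ε : ℝ≥0∞, ε ≠ 0 → ∀ᶠ x in atTop, H' (Ioi x) ≤ (1 + ε) * H (Ioi x))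
    (φ : ℝ → ℝ) (hφ : Tendsto φ atTop atTop) (c : ℝ≥0∞) (hc : c ≠ ⊤)
    (hev : ∀ᶠ x in atTop, H' (Ioi (φ x)) ≤ c * H' (Ioi x)) (ε : ℝ≥0∞) (hε : ε ≠ 0) :
    ∀ᶠ x in atTop, H (Ioi (φ x)) ≤ (c + ε) * H (Ioi x) := by
  have hc3 : 3 * (c + 1) ≠ ⊤ := ENNReal.mul_ne_top (by simp) (by simp [hc])
  set η : ℝ≥0∞ := min 1 (ε / (3 * (c + 1)))
  have hη : η ≠ 0 := by
    have : ε / (3 * (c + 1)) ≠ 0 := ENNReal.div_ne_zero.2 ⟨hε, hc3⟩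
    exact (lt_min one_pos (pos_iff_ne_zero.2 this)).ne'
  have hη1 : η ≤ 1 := min_le_left _ _
  have hη3 : η * (3 * c) ≤ ε := by
    calc η * (3 * c) ≤ (ε / (3 * (c + 1))) * (3 * (c + 1)) := by
          gcongr
          · exact min_le_right _ _
          · exact le_self_add
      _ = ε := ENNReal.div_mul_cancel (by simp) hc3
  filter_upwards [hφ.eventually (h1 η hη), hev, h2 η hη] with x a1 a2 a3
  calc H (Ioi (φ x)) ≤ (1 + η) * (c * ((1 + η) * H (Ioi x))) := by
        refine a1.trans ?_
        gcongr
        exact a2.trans (by gcongr)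
    _ = (c + 2 * η * c + η * η * c) * H (Ioi x) := by ring
    _ ≤ (c + 2 * η * c + η * 1 * c) * H (Ioi x) := by gcongr
    _ = (c + η * (3 * c)) * H (Ioi x) := by ring
    _ ≤ _ := by gcongr

lemma exists_half {ε : ℝ≥0∞} (hε : ε ≠ 0) : ∃ η : ℝ≥0∞, η ≠ 0 ∧ η ≠ ⊤ ∧ η + η ≤ ε := by
  refine ⟨min 1 (ε / 2), ?_, ?_, ?_⟩
  · have : ε / 2 ≠ 0 := ENNReal.div_ne_zero.2 ⟨hε, by simp⟩
    exact (lt_min one_pos (pos_iff_ne_zero.2 this)).ne'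
  · exact ((min_le_left _ _).trans_lt ENNReal.one_lt_top).ne
  · calc _ ≤ ε / 2 + ε / 2 := add_le_add (min_le_right _ _) (min_le_right _ _)
      _ = ε := ENNReal.add_halves ε

lemma LC_trans (H H' : Measure ℝ)
    (h1 : ∀ ε : ℝ≥0∞, ε ≠ 0 → ∀ᶠ x in atTop, H (Ioi x) ≤ (1 + ε) * H' (Ioi x))
    (h2 : ∀ ε : ℝ≥0∞, ε ≠ 0 → ∀ᶠ x in atTop, H' (Ioi x) ≤ (1 + ε) * H (Ioi x))
    (hL : LC H') : LC H := by
  intro a ha ε hε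
  obtain ⟨η, h0, ht, hle⟩ := exists_half hε
  have := trans_lemma H H' h1 h2 (fun x => x - a) (tendsto_atTop_add_const_right _ _ tendsto_id)
    (1 + η) (by simp [ht]) (hL a ha η h0) η h0
  filter_upwards [this] with x hx
  refine hx.trans ?_
  rw [add_assoc]
  gcongr

lemma J2_mono_right (μ ν ν' : Measure ℝ) [IsFiniteMeasure ν] [IsFiniteMeasure ν'] (c : ℝ≥0∞)
    (K x : ℝ) (h : ∀ y, K ≤ y → ν (Ioi y) ≤ c * ν' (Ioi y)) : J2 μ ν K x ≤ c * J2 μ ν' K x := by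
  unfold J2
  rw [Measure.prod_apply (J2_meas K x), Measure.prod_apply (J2_meas K x),
    ← lintegral_const_mul _ (measurable_measure_prodMk_left (J2_meas K x))]
  apply lintegral_mono
  intro m
  by_cases hm : K < m
  · have : Prod.mk m ⁻¹' {p : ℝ × ℝ | K < p.1 ∧ K < p.2 ∧ x < p.1 + p.2} = Ioi (max K (x - m)) := by
      ext y
      simp only [mem_preimage, mem_ofPred_eq, hm, true_and, mem_Ioi, max_lt_iff, sub_lt_iff_lt_add']
    simp only [this]
    exact h _ (le_max_left _ _)
  · have : Prod.mk m ⁻¹' {p : ℝ × ℝ | K < p.1 ∧ K < p.2 ∧ x < p.1 + p.2} = ∅ := by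
      ext y
      simp [hm]
    simp [this]

lemma J2_symm (μ ν : Measure ℝ) [IsFiniteMeasure μ] [IsFiniteMeasure ν] (K x : ℝ) :
    J2 μ ν K x = J2 ν μ K x := by
  unfold J2
  rw [← Measure.prod_swap, Measure.map_apply measurable_swap (J2_meas K x)]
  congr 1
  ext q
  simp only [mem_preimage, mem_ofPred_eq, Prod.fst_swap, Prod.snd_swap]
  rw [add_comm]
  tauto

lemma SC_trans (H H' : Measure ℝ) [IsFiniteMeasure H] [IsFiniteMeasure H']
    (h1 : ∀ ε : ℝ≥0∞, ε ≠ 0 → ∀ᶠ x in atTop, H (Ioi x) ≤ (1 + ε) * H' (Ioi x))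
    (h2 : ∀ ε : ℝ≥0∞, ε ≠ 0 → ∀ᶠ x in atTop, H' (Ioi x) ≤ (1 + ε) * H (Ioi x))
    (hS : SC H') : SC H := by
  intro ε hε
  obtain ⟨K0, hK0⟩ := hS (ε / 8) (ENNReal.div_ne_zero.2 ⟨hε, by simp⟩)
  obtain ⟨K1, hK1⟩ := eventually_atTop.1 (h1 1 one_ne_zero)
  refine ⟨max K0 K1, ?_⟩
  have hb : ∀ y, max K0 K1 ≤ y → H (Ioi y) ≤ (1 + 1) * H' (Ioi y) := fun y hy =>
    hK1 y ((le_max_right _ _).trans hy)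
  filter_upwards [hK0, h2 1 one_ne_zero] with x hx hx2
  calc J2 H H (max K0 K1) x ≤ (1 + 1) * J2 H H' (max K0 K1) x := J2_mono_right _ _ _ _ _ _ hb
    _ = (1 + 1) * J2 H' H (max K0 K1) x := by rw [J2_symm]
    _ ≤ (1 + 1) * ((1 + 1) * J2 H' H' (max K0 K1) x) := by
        gcongr; exact J2_mono_right _ _ _ _ _ _ hb
    _ ≤ (1 + 1) * ((1 + 1) * (ε / 8 * ((1 + 1) * H (Ioi x)))) := by
        gcongr
        refine (J2_anti _ _ _ _ _ (le_max_left _ _)).trans (hx.trans ?_)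
        gcongr
    _ = (ε / 8 * 8) * H (Ioi x) := by ring
    _ = ε * H (Ioi x) := by rw [ENNReal.div_mul_cancel (by simp) (by simp)]

lemma ratio_le (ν : Measure ℝ) [IsFiniteMeasure ν] (hpos : ∀ x, ν (Ioi x) ≠ 0) (a b r : ℝ)
    (hr : 0 ≤ r) :
    mTail ν a / mTail ν b ≤ r ↔ ν (Ioi a) ≤ ENNReal.ofReal r * ν (Ioi b) := by
  unfold mTail
  rw [div_le_iff₀ (ENNReal.toReal_pos (hpos b) (measure_ne_top _ _)),
    ← ENNReal.toReal_le_toReal (measure_ne_top _ _)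
      (ENNReal.mul_ne_top ENNReal.ofReal_ne_top (measure_ne_top _ _)),
    ENNReal.toReal_mul, ENNReal.toReal_ofReal hr]

lemma mTail_pos (ν : Measure ℝ) [IsFiniteMeasure ν] (hpos : ∀ x, ν (Ioi x) ≠ 0) (x : ℝ) :
    0 < mTail ν x := ENNReal.toReal_pos (hpos x) (measure_ne_top _ _)

lemma mTail_anti (ν : Measure ℝ) [IsFiniteMeasure ν] {a b : ℝ} (h : a ≤ b) :
    mTail ν b ≤ mTail ν a :=
  ENNReal.toReal_mono (measure_ne_top _ _) (measure_mono (Ioi_subset_Ioi h))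

lemma exists_real {ε : ℝ≥0∞} (hε : ε ≠ 0) : ∃ r : ℝ, 0 < r ∧ ENNReal.ofReal r ≤ ε := by
  have h1 : min 1 ε ≠ 0 := (lt_min one_pos (pos_iff_ne_zero.2 hε)).ne'
  have h2 : min 1 ε ≠ ⊤ := ((min_le_left _ _).trans_lt ENNReal.one_lt_top).ne
  refine ⟨(min 1 ε).toReal, ENNReal.toReal_pos h1 h2, ?_⟩
  rw [ENNReal.ofReal_toReal h2]
  exact min_le_right _ _

lemma memD_iff (ν : Measure ℝ) [IsFiniteMeasure ν] (hpos : ∀ x, ν (Ioi x) ≠ 0) :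
    MemD ν ↔ ∀ y : ℝ, 0 < y → y < 1 → ∃ C : ℝ≥0∞, C ≠ ⊤ ∧
      ∀ᶠ x in atTop, ν (Ioi (y * x)) ≤ C * ν (Ioi x) := by
  refine forall_congr' fun y => forall_congr' fun _ => forall_congr' fun _ => ⟨?_, ?_⟩
  · rintro ⟨C, hC⟩
    refine ⟨ENNReal.ofReal (max C 0), ENNReal.ofReal_ne_top, ?_⟩
    filter_upwards [hC] with x hx
    exact (ratio_le ν hpos _ _ _ (le_max_right _ _)).1 (hx.trans (le_max_left _ _))
  · rintro ⟨C, hCt, hC⟩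
    refine ⟨C.toReal, ?_⟩
    filter_upwards [hC] with x hx
    rw [ratio_le ν hpos _ _ _ ENNReal.toReal_nonneg, ENNReal.ofReal_toReal hCt]
    exact hx

lemma memPD_iff (ν : Measure ℝ) [IsFiniteMeasure ν] (hpos : ∀ x, ν (Ioi x) ≠ 0) :
    MemPD ν ↔ ∀ b : ℝ, 1 < b → ∃ c : ℝ≥0∞, c < 1 ∧
      ∀ᶠ x in atTop, ν (Ioi (b * x)) ≤ c * ν (Ioi x) := by
  refine forall_congr' fun y => forall_congr' fun _ => ⟨?_, ?_⟩
  · rintro ⟨C, hC1, hC⟩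
    refine ⟨ENNReal.ofReal (max C 0), ?_, ?_⟩
    · rw [ENNReal.ofReal_lt_one]; exact max_lt hC1 one_pos
    filter_upwards [hC] with x hx
    exact (ratio_le ν hpos _ _ _ (le_max_right _ _)).1 (hx.trans (le_max_left _ _))
  · rintro ⟨C, hC1, hC⟩
    have hCt : C ≠ ⊤ := (hC1.trans ENNReal.one_lt_top).ne
    refine ⟨C.toReal, ?_, ?_⟩
    · have := (ENNReal.toReal_lt_toReal hCt ENNReal.one_ne_top).2 hC1
      simpa using this
    filter_upwards [hC] with x hx
    rw [ratio_le ν hpos _ _ _ ENNReal.toReal_nonneg, ENNReal.ofReal_toReal hCt]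
    exact hx

lemma memL_iff (ν : Measure ℝ) [IsFiniteMeasure ν] (hpos : ∀ x, ν (Ioi x) ≠ 0) :
    MemL ν ↔ LC ν := by
  refine forall_congr' fun a => forall_congr' fun ha => ⟨?_, ?_⟩
  · intro h ε hε
    obtain ⟨r, hr, hre⟩ := exists_real hε
    filter_upwards [h.eventually_le_const (show (1 : ℝ) < 1 + r by linarith)] with x hx
    refine ((ratio_le ν hpos _ _ _ (by linarith)).1 hx).trans ?_
    rw [ENNReal.ofReal_add zero_le_one hr.le, ENNReal.ofReal_one]
    gcongr
  · intro h
    rw [tendsto_order]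
    constructor
    · intro b hb
      filter_upwards with x
      refine hb.trans_le ?_
      rw [le_div_iff₀ (mTail_pos ν hpos x), one_mul]
      exact mTail_anti ν (by linarith)
    · intro b hb
      filter_upwards [h (ENNReal.ofReal ((b - 1) / 2)) (by simp; linarith)] with x hx
      have : mTail ν (x - a) / mTail ν x ≤ 1 + (b - 1) / 2 := by
        rw [ratio_le ν hpos _ _ _ (by linarith), ENNReal.ofReal_add zero_le_one (by linarith),
          ENNReal.ofReal_one]
        exact hx
      linarith

lemma memC_iff (ν : Measure ℝ) [IsFiniteMeasure ν] (hpos : ∀ x, ν (Ioi x) ≠ 0) :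
    MemC ν ↔ ∀ ε : ℝ≥0∞, ε ≠ 0 → ∃ b : ℝ, 0 < b ∧ b < 1 ∧
      ∀ᶠ x in atTop, ν (Ioi (b * x)) ≤ (1 + ε) * ν (Ioi x) := by
  have hnn : ∀ b x, 0 ≤ mTail ν (b * x) / mTail ν x := fun b x =>
    div_nonneg (mTail_pos ν hpos _).le (mTail_pos ν hpos _).le
  have hle : ∀ b : ℝ, 1 < b → ∀ᶠ x in atTop, mTail ν (b * x) / mTail ν x ≤ 1 := by
    intro b hb
    filter_upwards [eventually_ge_atTop 0] with x hx
    rw [div_le_one (mTail_pos ν hpos x)]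
    exact mTail_anti ν (by nlinarith)
  have hbdd : ∀ b : ℝ, IsBoundedUnder (· ≥ ·) atTop (fun x => mTail ν (b * x) / mTail ν x) :=
    fun b => isBoundedUnder_of ⟨0, fun x => hnn b x⟩
  have hcob : ∀ b : ℝ, 1 < b →
      IsCoboundedUnder (· ≥ ·) atTop (fun x => mTail ν (b * x) / mTail ν x) :=
    fun b hb => (isBoundedUnder_of_eventually_le (hle b hb)).isCoboundedUnder_ge
  constructor
  · intro h ε hε
    obtain ⟨r, hr, hre⟩ := exists_real hε
    have hr1 : (1 + r)⁻¹ < 1 := inv_lt_one_of_one_lt₀ (by linarith)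
    obtain ⟨b, hb, hb1⟩ := ((h.eventually_const_lt hr1).and self_mem_nhdsWithin).exists
    have hb1' : (1 : ℝ) < b := hb1
    have hev := eventually_lt_of_lt_liminf hb (hbdd b)
    have hb0 : 0 < b := by linarith
    refine ⟨b⁻¹, by positivity, inv_lt_one_of_one_lt₀ hb1', ?_⟩
    have ht : Tendsto (fun x : ℝ => b⁻¹ * x) atTop atTop :=
      tendsto_id.const_mul_atTop (by positivity)
    filter_upwards [ht.eventually hev] with x hx
    rw [show b * (b⁻¹ * x) = x by field_simp] at hx
    have : mTail ν (b⁻¹ * x) / mTail ν x ≤ 1 + r := by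
      rw [← inv_div]
      exact (inv_lt_of_inv_lt₀ (by linarith) hx).le
    refine ((ratio_le ν hpos _ _ _ (by linarith)).1 this).trans ?_
    rw [ENNReal.ofReal_add zero_le_one hr.le, ENNReal.ofReal_one]
    gcongr
  · intro h
    unfold MemC
    rw [tendsto_order]
    constructor
    · intro a ha
      obtain ⟨r, hr, har⟩ : ∃ r : ℝ, 0 < r ∧ a < (1 + r)⁻¹ := by
        rcases le_or_gt a 0 with h0 | h0
        · exact ⟨1, one_pos, h0.trans_lt (by norm_num)⟩
        · refine ⟨(a⁻¹ - 1) / 2, ?_, ?_⟩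
          · have := (one_lt_inv₀ h0).2 ha
            linarith
          · have := (one_lt_inv₀ h0).2 ha
            rw [lt_inv_comm₀ h0 (by linarith)]
            linarith
      obtain ⟨b, hb0, hb1, hev⟩ := h (ENNReal.ofReal r) (by simp [hr])
      have hbi : 1 < b⁻¹ := (one_lt_inv₀ hb0).2 hb1
      filter_upwards [Ioo_mem_nhdsGT hbi] with c hc
      refine har.trans_le ?_
      apply le_liminf_of_le (hcob c hc.1)
      have ht : Tendsto (fun x : ℝ => b⁻¹ * x) atTop atTop :=
        tendsto_id.const_mul_atTop (by positivity)
      filter_upwards [ht.eventually hev, eventually_ge_atTop 0] with x hx hx0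
      rw [show b * (b⁻¹ * x) = x by field_simp, ← ENNReal.ofReal_one,
        ← ENNReal.ofReal_add zero_le_one hr.le, ← ratio_le ν hpos _ _ _ (by linarith)] at hx
      have h1 : mTail ν (b⁻¹ * x) ≤ mTail ν (c * x) :=
        mTail_anti ν (mul_le_mul_of_nonneg_right hc.2.le hx0)
      have h2 := mTail_pos ν hpos x
      have h3 := mTail_pos ν hpos (b⁻¹ * x)
      rw [div_le_iff₀ h3] at hx
      rw [inv_le_iff_one_le_mul₀ (by linarith), div_mul_eq_mul_div, le_div_iff₀ h2, one_mul]
      nlinarith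
    · intro a ha
      filter_upwards [self_mem_nhdsWithin] with c hc
      refine lt_of_le_of_lt ?_ ha
      apply liminf_le_of_le (hbdd c)
      intro b hb
      obtain ⟨x, h1, h2⟩ := (hb.and (hle c hc)).exists
      exact h1.trans h2

lemma real_Ici (ν : Measure ℝ) [IsProbabilityMeasure ν] (h0 : ν (Iio 0) = 0) :
    ν.real (Ici 0) = 1 := by
  have : Ici (0 : ℝ) = (Iio 0)ᶜ := by simp
  rw [this, probReal_compl_eq_one_sub measurableSet_Iio, Measure.real, h0]
  simp

lemma real_Icc (ν : Measure ℝ) [IsProbabilityMeasure ν] (h0 : ν (Iio 0) = 0) (a : ℝ) (ha : 0 ≤ a) :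
    ν.real (Icc 0 a) = 1 - mTail ν a := by
  have h1 : Ici (0 : ℝ) = Icc 0 a ∪ Ioi a := (Icc_union_Ioi_eq_Ici ha).symm
  have h2 := real_Ici ν h0
  have hd : Disjoint (Icc 0 a) (Ioi a) := by
    rw [Set.disjoint_left]
    intro y hy hy'
    exact not_lt.2 hy.2 hy'
  rw [h1, measureReal_union hd measurableSet_Ioi] at h2
  change _ + mTail ν a = 1 at h2
  linarith

lemma real_Ioc (ν : Measure ℝ) [IsProbabilityMeasure ν] (a x : ℝ) (ha : a ≤ x) :
    ν.real (Ioc a x) = mTail ν a - mTail ν x := by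
  have h1 : Ioi a = Ioc a x ∪ Ioi x := (Ioc_union_Ioi_eq_Ioi ha).symm
  have h2 : ν.real (Ioi a) = ν.real (Ioc a x) + ν.real (Ioi x) := by
    have hd : Disjoint (Ioc a x) (Ioi x) := by
      rw [Set.disjoint_left]
      intro y hy hy'
      exact not_lt.2 hy.2 hy'
    rw [← measureReal_union hd measurableSet_Ioi, ← h1]
  change mTail ν a = _ + mTail ν x at h2
  linarith

/-- the set where the sum exceeds x -/
def sumSet (x : ℝ) : Set (ℝ × ℝ) := {p | x < p.1 + p.2}

lemma conv_tail (ν : Measure ℝ) [IsProbabilityMeasure ν] (x : ℝ) :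
    mTail (mConv ν ν) x = (ν.prod ν).real (sumSet x) := by
  unfold mTail mConv
  rw [Measure.map_apply (by fun_prop) measurableSet_Ioi]
  rfl

lemma mTail_tendsto (ν : Measure ℝ) [IsFiniteMeasure ν] : Tendsto (mTail ν) atTop (𝓝 0) := by
  rw [tendsto_order]
  constructor
  · intro a ha
    exact Eventually.of_forall fun x => ha.trans_le ENNReal.toReal_nonneg
  · intro a ha
    obtain ⟨t, -, -, ht⟩ := exists_Ioi_small ν 0 (ENNReal.ofReal (a / 2)) (by simp; linarith)
    filter_upwards [eventually_ge_atTop t] with x hx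
    have h1 : mTail ν t ≤ a / 2 := ENNReal.toReal_le_of_le_ofReal (by linarith) ht
    have h2 := mTail_anti ν hx
    linarith

lemma conv_A (ν : Measure ℝ) [IsProbabilityMeasure ν] (h0 : ν (Iio 0) = 0) (a x : ℝ)
    (ha : 0 ≤ a) (hx : a ≤ x) :
    mTail ν x + (1 - mTail ν a) * mTail ν x + (mTail ν a - mTail ν x) * mTail ν (x - a) ≤
      mTail (mConv ν ν) x := by
  have e1 : (ν.prod ν).real (Ioi x ×ˢ Ici 0) = mTail ν x := by
    rw [measureReal_prod_prod, real_Ici ν h0, mul_one]; rfl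
  have e2 : (ν.prod ν).real (Icc 0 a ×ˢ Ioi x) = (1 - mTail ν a) * mTail ν x := by
    rw [measureReal_prod_prod, real_Icc ν h0 a ha]; rfl
  have e3 : (ν.prod ν).real (Ioc a x ×ˢ Ioi (x - a)) =
      (mTail ν a - mTail ν x) * mTail ν (x - a) := by
    rw [measureReal_prod_prod, real_Ioc ν a x hx]; rfl
  rw [conv_tail, ← e3, ← e2, ← e1, ← measureReal_union _ (measurableSet_Icc.prod measurableSet_Ioi),
    ← measureReal_union _ (measurableSet_Ioc.prod measurableSet_Ioi)]
  · refine measureReal_mono ?_ (measure_ne_top _ _)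
    rintro ⟨y1, y2⟩ hy
    simp only [mem_union, mem_prod, mem_Ioi, mem_Ici, mem_Icc, mem_Ioc] at hy
    change x < y1 + y2
    rcases hy with (hy | hy) | hy <;> linarith [hy.1, hy.2]
  · rw [Set.disjoint_left]
    rintro ⟨y1, y2⟩ hy hy'
    simp only [mem_union, mem_prod, mem_Ioi, mem_Ici, mem_Icc, mem_Ioc] at hy hy'
    rcases hy with hy | hy
    · linarith [hy.1, hy'.1.2]
    · linarith [hy.1.2, hy'.1.1]
  · rw [Set.disjoint_left]
    rintro ⟨y1, y2⟩ hy hy'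
    simp only [mem_prod, mem_Ioi, mem_Ici, mem_Icc] at hy hy'
    linarith [hy.1, hy'.1.2]

lemma conv_B (ν : Measure ℝ) [IsProbabilityMeasure ν] (h0 : ν (Iio 0) = 0) (K x : ℝ)
    (hK : 0 ≤ K) (hx : K ≤ x) :
    2 * (1 - mTail ν K) * mTail ν x + (J2 ν ν K x).toReal ≤ mTail (mConv ν ν) x := by
  have e1 : (ν.prod ν).real (Icc 0 K ×ˢ Ioi x) = (1 - mTail ν K) * mTail ν x := by
    rw [measureReal_prod_prod, real_Icc ν h0 K hK]; rfl
  have e2 : (ν.prod ν).real (Ioi x ×ˢ Icc 0 K) = (1 - mTail ν K) * mTail ν x := by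
    rw [measureReal_prod_prod, real_Icc ν h0 K hK, mul_comm]; rfl
  have e3 : (J2 ν ν K x).toReal =
    (ν.prod ν).real {p | K < p.1 ∧ K < p.2 ∧ x < p.1 + p.2} := rfl
  rw [mul_assoc, two_mul]
  nth_rw 1 [← e1]
  rw [← e2, e3, conv_tail, ← measureReal_union _ (measurableSet_Ioi.prod measurableSet_Icc),
    ← measureReal_union _ (J2_meas K x)]
  · refine measureReal_mono ?_ (measure_ne_top _ _)
    rintro ⟨y1, y2⟩ hy
    simp only [mem_union, mem_prod, mem_Ioi, mem_Icc, mem_ofPred_eq] at hy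
    change x < y1 + y2
    rcases hy with (hy | hy) | hy <;> linarith [hy.1, hy.2]
  · rw [Set.disjoint_left]
    rintro ⟨y1, y2⟩ hy hy'
    simp only [mem_union, mem_prod, mem_Ioi, mem_Icc, mem_ofPred_eq] at hy hy'
    rcases hy with hy | hy
    · linarith [hy.1.2, hy'.1]
    · linarith [hy.2.2, hy'.2.1]
  · rw [Set.disjoint_left]
    rintro ⟨y1, y2⟩ hy hy'
    simp only [mem_prod, mem_Ioi, mem_Icc] at hy hy'
    linarith [hy.1.2, hy'.1]

lemma conv_C (ν : Measure ℝ) [IsProbabilityMeasure ν] (K x : ℝ) :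
    mTail (mConv ν ν) x ≤ 2 * mTail ν (x - K) + (J2 ν ν K x).toReal := by
  have e1 : (ν.prod ν).real (univ ×ˢ Ioi (x - K)) = mTail ν (x - K) := by
    rw [measureReal_prod_prod]; simp; rfl
  have e2 : (ν.prod ν).real (Ioi (x - K) ×ˢ univ) = mTail ν (x - K) := by
    rw [measureReal_prod_prod]; simp; rfl
  have e3 : (J2 ν ν K x).toReal =
    (ν.prod ν).real {p | K < p.1 ∧ K < p.2 ∧ x < p.1 + p.2} := rfl
  rw [two_mul]
  nth_rw 1 [← e1]
  rw [← e2, e3, conv_tail]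
  refine le_trans (measureReal_mono (s₂ := (univ ×ˢ Ioi (x - K) ∪ Ioi (x - K) ×ˢ univ) ∪
    {p | K < p.1 ∧ K < p.2 ∧ x < p.1 + p.2}) ?_) ((measureReal_union_le _ _).trans
      (add_le_add_left (measureReal_union_le _ _) _))
  rintro ⟨y1, y2⟩ hy
  change x < y1 + y2 at hy
  simp only [mem_union, mem_prod, mem_Ioi, mem_univ, mem_ofPred_eq, true_and, and_true]
  rcases le_or_gt y1 K with h | h
  · left; left; linarith
  rcases le_or_gt y2 K with h' | h'
  · left; right; linarith
  · right; exact ⟨h, h', hy⟩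

lemma conv_D (ν : Measure ℝ) [IsProbabilityMeasure ν] (h0 : ν (Iio 0) = 0) (x : ℝ) (hx : 0 ≤ x) :
    (2 - mTail ν x) * mTail ν x ≤ mTail (mConv ν ν) x := by
  have := conv_A ν h0 x x hx le_rfl
  nlinarith

lemma memS_iff (ν : Measure ℝ) [IsProbabilityMeasure ν] (h0 : ν (Iio 0) = 0)
    (hpos : ∀ x, ν (Ioi x) ≠ 0) : MemS ν ↔ LC ν ∧ SC ν := by
  constructor
  · intro h
    constructor
    · rw [← memL_iff ν hpos]
      intro a ha
      have hta := mTail_pos ν hpos a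
      have ht0 := mTail_tendsto ν
      have hlim : Tendsto (fun x => (mTail (mConv ν ν) x / mTail ν x - 2 + mTail ν a) /
          (mTail ν a - mTail ν x)) atTop (𝓝 1) := by
        have : Tendsto (fun x => (mTail (mConv ν ν) x / mTail ν x - 2 + mTail ν a) /
          (mTail ν a - mTail ν x)) atTop (𝓝 ((2 - 2 + mTail ν a) / (mTail ν a - 0))) :=
          ((h.sub_const 2).add_const _).div (tendsto_const_nhds.sub ht0) (by simpa using hta.ne')
        convert this using 2
        rw [sub_self, zero_add, sub_zero, div_self hta.ne']
      refine tendsto_of_tendsto_of_tendsto_of_le_of_le' tendsto_const_nhds hlim ?_ ?_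
      · filter_upwards with x
        rw [le_div_iff₀ (mTail_pos ν hpos x), one_mul]
        exact mTail_anti ν (by linarith)
      · filter_upwards [ht0.eventually_lt_const hta, eventually_ge_atTop a] with x hx hxa
        have hA := conv_A ν h0 a x ha.le hxa
        have htx := mTail_pos ν hpos x
        rw [le_div_iff₀ (by linarith), ← sub_nonneg]
        have : mTail (mConv ν ν) x / mTail ν x - 2 + mTail ν a -
            mTail ν (x - a) / mTail ν x * (mTail ν a - mTail ν x) =
            (mTail (mConv ν ν) x - (mTail ν x + (1 - mTail ν a) * mTail ν x +
              (mTail ν a - mTail ν x) * mTail ν (x - a))) / mTail ν x := by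
          field_simp
          ring
        rw [this]
        exact div_nonneg (by linarith) htx.le
    · intro ε hε
      obtain ⟨r, hr, hre⟩ := exists_real hε
      obtain ⟨K, hK, hK0⟩ := (((mTail_tendsto ν).eventually_lt_const
        (show (0 : ℝ) < r / 4 by linarith)).and (eventually_ge_atTop 0)).exists
      refine ⟨K, ?_⟩
      filter_upwards [h.eventually_lt_const (show (2 : ℝ) < 2 + r / 2 by linarith),
        eventually_ge_atTop K] with x hx hxK
      have hB := conv_B ν h0 K x hK0 hxK
      have htx := mTail_pos ν hpos x
      rw [div_lt_iff₀ htx] at hx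
      have hJ : (J2 ν ν K x).toReal ≤ r * mTail ν x := by nlinarith
      calc J2 ν ν K x = ENNReal.ofReal (J2 ν ν K x).toReal :=
            (ENNReal.ofReal_toReal (measure_ne_top _ _)).symm
        _ ≤ ENNReal.ofReal (r * mTail ν x) := ENNReal.ofReal_le_ofReal hJ
        _ = ENNReal.ofReal r * ν (Ioi x) := by
            rw [ENNReal.ofReal_mul hr.le, mTail, ENNReal.ofReal_toReal (measure_ne_top _ _)]
        _ ≤ _ := by gcongr
  · rintro ⟨hL, hS⟩
    rw [← memL_iff ν hpos] at hL
    unfold MemS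
    rw [tendsto_order]
    constructor
    · intro a ha
      filter_upwards [(mTail_tendsto ν).eventually_lt_const (show 0 < 2 - a by linarith),
        eventually_ge_atTop 0] with x hx hx0
      have hD := conv_D ν h0 x hx0
      have htx := mTail_pos ν hpos x
      rw [lt_div_iff₀ htx]
      nlinarith
    · intro a ha
      obtain ⟨K0, hK0⟩ := hS (ENNReal.ofReal ((a - 2) / 4)) (by simp; linarith)
      have hKp : 0 < max K0 1 := by positivity
      filter_upwards [hK0, (hL (max K0 1) hKp).eventually_lt_const
        (show (1 : ℝ) < 1 + (a - 2) / 4 by linarith)] with x hx hx2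
      have htx := mTail_pos ν hpos x
      have hC := conv_C ν (max K0 1) x
      have hJ : (J2 ν ν (max K0 1) x).toReal ≤ (a - 2) / 4 * mTail ν x := by
        have := ENNReal.toReal_mono (ENNReal.mul_ne_top ENNReal.ofReal_ne_top (measure_ne_top _ _))
          ((J2_anti ν ν K0 (max K0 1) x (le_max_left _ _)).trans hx)
        rwa [ENNReal.toReal_mul, ENNReal.toReal_ofReal (by linarith)] at this
      rw [div_lt_iff₀ htx] at hx2 ⊢
      nlinarith

/-- All closure properties, abstractly. -/
lemma core (F G H : Measure ℝ) [IsProbabilityMeasure F] [IsFiniteMeasure G]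
    [IsProbabilityMeasure H] (hF0 : F (Iio 0) = 0) (hH0 : H (Iio 0) = 0)
    (hFp : ∀ x, F (Ioi x) ≠ 0) (hHp : ∀ x, H (Ioi x) ≠ 0)
    (hG : G (Iic 0) = 0) (hG0 : G (Ioi 0) ≠ 0) (hB : BC G (pm G F))
    (h1 : ∀ ε : ℝ≥0∞, ε ≠ 0 → ∀ᶠ x in atTop, H (Ioi x) ≤ (1 + ε) * pm G F (Ioi x))
    (h2 : ∀ ε : ℝ≥0∞, ε ≠ 0 → ∀ᶠ x in atTop, pm G F (Ioi x) ≤ (1 + ε) * H (Ioi x)) :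
    (MemC F → MemC H) ∧ (MemD F → MemD H) ∧ (MemS F → MemS H) ∧ (MemL F → MemL H) ∧
      (MemPD F → MemPD H) := by
  have hsc : ∀ b : ℝ, 0 < b → ∀ c : ℝ≥0∞, c ≠ ⊤ →
      (∀ᶠ z in atTop, F (Ioi (b * z)) ≤ c * F (Ioi z)) → ∀ ε : ℝ≥0∞, ε ≠ 0 →
      ∀ᶠ x in atTop, H (Ioi (b * x)) ≤ (c + ε) * H (Ioi x) := by
    intro b hb c hc hev ε hε
    obtain ⟨η, hη, hηt, hηe⟩ := exists_half hε
    have e1 := scale_lemma G F hG hB b c hev η hη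
    have e2 := trans_lemma H (pm G F) h1 h2 (fun x => b * x) (tendsto_id.const_mul_atTop hb)
      (c + η) (by simp [hc, hηt]) e1 η hη
    filter_upwards [e2] with x hx
    refine hx.trans ?_
    rw [add_assoc]
    gcongr
  refine ⟨?_, ?_, ?_, ?_, ?_⟩
  · rw [memC_iff F hFp, memC_iff H hHp]
    intro h ε hε
    obtain ⟨η, hη, hηt, hηe⟩ := exists_half hε
    obtain ⟨b, hb0, hb1, hb⟩ := h η hη
    refine ⟨b, hb0, hb1, ?_⟩
    filter_upwards [hsc b hb0 (1 + η) (by simp [hηt]) hb η hη] with x hx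
    refine hx.trans ?_
    rw [add_assoc]
    gcongr
  · rw [memD_iff F hFp, memD_iff H hHp]
    intro h y hy0 hy1
    obtain ⟨C, hC, hev⟩ := h y hy0 hy1
    exact ⟨C + 1, by simp [hC], hsc y hy0 C hC hev 1 one_ne_zero⟩
  · rw [memS_iff F hF0 hFp, memS_iff H hH0 hHp]
    rintro ⟨hL, hS⟩
    exact ⟨LC_trans H _ h1 h2 (LC_pm G F hG hG0 hB hL),
      SC_trans H _ h1 h2 (SC_pm G F hG hB hL hS)⟩
  · rw [memL_iff F hFp, memL_iff H hHp]
    intro hL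
    exact LC_trans H _ h1 h2 (LC_pm G F hG hG0 hB hL)
  · rw [memPD_iff F hFp, memPD_iff H hHp]
    intro h b hb
    obtain ⟨c, hc1, hev⟩ := h b hb
    obtain ⟨c', hcc', hc'1⟩ := exists_between hc1
    refine ⟨c', hc'1, ?_⟩
    filter_upwards [hsc b (by linarith) c (hc1.trans ENNReal.one_lt_top).ne hev (c' - c)
      (tsub_pos_of_lt hcc').ne'] with x hx
    rwa [add_tsub_cancel_of_le hcc'.le] at hx

lemma measSupport_ae (μ : Measure ℝ) : ∀ᵐ t ∂μ, t ∈ measSupport μ := by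
  rw [ae_iff]
  apply measure_null_of_locally_null
  intro t ht
  simp only [measSupport, mem_ofPred_eq, not_forall, not_lt, nonpos_iff_eq_zero, exists_prop] at ht
  obtain ⟨U, hU, hU0⟩ := ht
  exact ⟨U, mem_nhdsWithin_of_mem_nhds hU, hU0⟩

lemma mix_tail (μ : Measure ℝ) [IsProbabilityMeasure μ] (κ : Kernel ℝ ℝ) [IsMarkovKernel κ]
    (hμ : μ (Iio 0) = 0) (x : ℝ) (hx : 0 ≤ x) :
    ((μ ⊗ₘ κ).map (fun p => p.1 * p.2)) (Ioi x) = ∫⁻ t in Ioi 0, κ t (Ioi (x / t)) ∂μ := by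
  have hm : Measurable (fun p : ℝ × ℝ => p.1 * p.2) := by fun_prop
  rw [Measure.map_apply hm measurableSet_Ioi, Measure.compProd_apply (hm measurableSet_Ioi),
    ← lintegral_indicator measurableSet_Ioi]
  apply lintegral_congr_ae
  have : ∀ᵐ t ∂μ, 0 ≤ t := by
    rw [ae_iff]; convert hμ using 2; ext t; simp
  filter_upwards [this] with t ht
  rcases ht.eq_or_lt with h | h
  · subst h
    have : Prod.mk (0 : ℝ) ⁻¹' ((fun p : ℝ × ℝ => p.1 * p.2) ⁻¹' Ioi x) = ∅ := by
      ext y; simp [hx]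
    simp [this]
  · rw [indicator_of_mem (show t ∈ Ioi 0 from h)]
    congr 1
    ext y
    simp [div_lt_iff₀' h]

lemma mix_meas (κ : Kernel ℝ ℝ) [IsMarkovKernel κ] (x : ℝ) :
    Measurable (fun t => κ t (Ioi (x / t))) := by
  have hs : MeasurableSet {p : ℝ × ℝ | x / p.1 < p.2} :=
    measurableSet_lt (by fun_prop) (by fun_prop)
  exact Kernel.measurable_kernel_prodMk_left hs

lemma mix_main (μ F : Measure ℝ) [IsProbabilityMeasure μ] [IsProbabilityMeasure F]
    (κ : Kernel ℝ ℝ) [IsMarkovKernel κ] (hμ : μ (Iio 0) = 0) (hμ0 : μ (Ioi 0) ≠ 0)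
    (h : ℝ → ℝ) (hh : Measurable h) (hhpos : ∀ t, 0 < h t) (S : Set ℝ) (hS : ∀ᵐ t ∂μ, t ∈ S)
    (hCD : ∀ ε : ℝ, 0 < ε → ∀ᶠ x in atTop, ∀ t ∈ S,
      |(κ t (Ioi x)).toReal / (h t * (F (Ioi x)).toReal) - 1| ≤ ε)
    (H : Measure ℝ) [IsProbabilityMeasure H] (hHdef : H = (μ ⊗ₘ κ).map (fun p => p.1 * p.2))
    (hB : ∀ c : ℝ, 0 < c → Tendsto (fun x => (μ (Ioi (c * x))).toReal / (H (Ioi x)).toReal)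
      atTop (𝓝 0)) (hF0 : F (Iio 0) = 0) (hH0 : H (Iio 0) = 0) :
    (MemC F → MemC H) ∧ (MemD F → MemD H) ∧ (MemS F → MemS H) ∧ (MemL F → MemL H) ∧
      (MemPD F → MemPD H) := by
  obtain ⟨s0, hs0⟩ := hS.exists
  -- positivity
  obtain ⟨y1, hy1⟩ := eventually_atTop.1 (hCD (1 / 2) (by norm_num))
  have hFp1 : ∀ y, y1 ≤ y → F (Ioi y) ≠ 0 := by
    intro y hy h0
    have := hy1 y hy s0 hs0
    rw [h0] at this
    norm_num at this
  have hFp : ∀ y, F (Ioi y) ≠ 0 := fun y h0 =>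
    hFp1 (max y y1) (le_max_right _ _) (measure_mono_null (Ioi_subset_Ioi (le_max_left _ _)) h0)
  have hFr : ∀ y, 0 < (F (Ioi y)).toReal := fun y => ENNReal.toReal_pos (hFp y) (measure_ne_top _ _)
  have hκp : ∀ t ∈ S, ∀ y, κ t (Ioi y) ≠ 0 := by
    intro t ht y h0
    have h0' : κ t (Ioi (max y y1)) = 0 :=
      measure_mono_null (Ioi_subset_Ioi (le_max_left _ _)) h0
    have := hy1 (max y y1) (le_max_right _ _) t ht
    rw [h0'] at this
    norm_num at this
  -- two-sided bounds
  have hbd : ∀ e : ℝ, 0 < e → e < 1 → ∃ y0 : ℝ, 0 < y0 ∧ ∀ y, y0 ≤ y → ∀ t ∈ S,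
      κ t (Ioi y) ≤ ENNReal.ofReal (1 + e) * (ENNReal.ofReal (h t) * F (Ioi y)) ∧
      ENNReal.ofReal (1 - e) * (ENNReal.ofReal (h t) * F (Ioi y)) ≤ κ t (Ioi y) := by
    intro e he he1
    obtain ⟨y2, hy2⟩ := eventually_atTop.1 (hCD e he)
    refine ⟨max y2 1, by positivity, fun y hy t ht => ?_⟩
    have h1 := hy2 y ((le_max_left _ _).trans hy) t ht
    have hpos : 0 < h t * (F (Ioi y)).toReal := mul_pos (hhpos t) (hFr y)
    rw [abs_le] at h1
    obtain ⟨h2, h3⟩ := h1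
    have h4 : (κ t (Ioi y)).toReal ≤ (1 + e) * (h t * (F (Ioi y)).toReal) := by
      rw [← div_le_iff₀ hpos]; linarith
    have h5 : (1 - e) * (h t * (F (Ioi y)).toReal) ≤ (κ t (Ioi y)).toReal := by
      rw [← le_div_iff₀ hpos]; linarith
    have hfin : ∀ r : ℝ, ENNReal.ofReal r * (ENNReal.ofReal (h t) * F (Ioi y)) ≠ ⊤ := fun r =>
      ENNReal.mul_ne_top ENNReal.ofReal_ne_top
        (ENNReal.mul_ne_top ENNReal.ofReal_ne_top (measure_ne_top _ _))
    constructor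
    · rw [← ENNReal.toReal_le_toReal (measure_ne_top _ _) (hfin _), ENNReal.toReal_mul,
        ENNReal.toReal_mul, ENNReal.toReal_ofReal (by linarith), ENNReal.toReal_ofReal (hhpos t).le]
      exact h4
    · rw [← ENNReal.toReal_le_toReal (hfin _) (measure_ne_top _ _), ENNReal.toReal_mul,
        ENNReal.toReal_mul, ENNReal.toReal_ofReal (by linarith), ENNReal.toReal_ofReal (hhpos t).le]
      exact h5
  -- bound for h
  obtain ⟨C, hC1, hC⟩ : ∃ C : ℝ, 1 ≤ C ∧ ∀ t ∈ S, h t ≤ C := by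
    refine ⟨max 1 (2 / (F (Ioi y1)).toReal), le_max_left _ _, fun t ht => ?_⟩
    refine le_trans ?_ (le_max_right _ _)
    have h1 := (abs_le.1 (hy1 y1 le_rfl t ht)).1
    have hpos : 0 < h t * (F (Ioi y1)).toReal := mul_pos (hhpos t) (hFr y1)
    have h5 : (1 / 2) * (h t * (F (Ioi y1)).toReal) ≤ (κ t (Ioi y1)).toReal := by
      rw [← le_div_iff₀ hpos]; linarith
    have h6 : (κ t (Ioi y1)).toReal ≤ 1 := by
      have := ENNReal.toReal_mono ENNReal.one_ne_top (prob_le_one (μ := κ t) (s := Ioi y1))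
      simpa using this
    rw [le_div_iff₀ (hFr y1)]
    linarith
  have htail : ∀ x, 0 ≤ x → H (Ioi x) = ∫⁻ t in Ioi 0, κ t (Ioi (x / t)) ∂μ := by
    intro x hx; rw [hHdef, mix_tail μ κ hμ x hx]
  have hSr : ∀ᵐ t ∂(μ.restrict (Ioi 0)), t ∈ S ∧ 0 < t := by
    filter_upwards [ae_restrict_of_ae hS, ae_restrict_mem measurableSet_Ioi] with t h1 h2
    exact ⟨h1, h2⟩
  have hHp0 : ∀ x, 0 ≤ x → H (Ioi x) ≠ 0 := by
    intro x hx h0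
    rw [htail x hx, lintegral_eq_zero_iff (mix_meas κ x)] at h0
    have : ∀ᵐ t ∂(μ.restrict (Ioi 0)), False := by
      filter_upwards [h0, hSr] with t h1 h2
      exact hκp t h2.1 _ h1
    rw [ae_iff] at this
    simp only [not_false_eq_true] at this
    apply hμ0
    rw [← Measure.restrict_apply_univ]
    simpa using this
  have hHp : ∀ x, H (Ioi x) ≠ 0 := fun x h0 =>
    hHp0 (max x 0) (le_max_right _ _) (measure_mono_null (Ioi_subset_Ioi (le_max_left _ _)) h0)
  have hHr : ∀ y, 0 < (H (Ioi y)).toReal := fun y => ENNReal.toReal_pos (hHp y) (measure_ne_top _ _)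
  -- the tilted measure
  set G : Measure ℝ := (μ.restrict (Ioi 0)).withDensity (fun t => ENNReal.ofReal (h t)) with hGdef
  have hhm : Measurable (fun t => ENNReal.ofReal (h t)) := hh.ennreal_ofReal
  have hGle : ∀ B, MeasurableSet B → G B ≤ ENNReal.ofReal C * μ B := by
    intro B hBm
    rw [hGdef, withDensity_apply _ hBm]
    calc ∫⁻ t in B, ENNReal.ofReal (h t) ∂(μ.restrict (Ioi 0))
        ≤ ∫⁻ t in B, ENNReal.ofReal C ∂(μ.restrict (Ioi 0)) := by
          apply lintegral_mono_ae
          filter_upwards [ae_restrict_of_ae hSr] with t ht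
          exact ENNReal.ofReal_le_ofReal (hC t ht.1)
      _ = ENNReal.ofReal C * (μ.restrict (Ioi 0)) B := by rw [setLIntegral_const]
      _ ≤ _ := by gcongr; exact Measure.restrict_le_self
  have : IsFiniteMeasure G := ⟨(hGle univ MeasurableSet.univ).trans_lt
    (ENNReal.mul_lt_top ENNReal.ofReal_lt_top (measure_lt_top _ _))⟩
  have hG : G (Iic 0) = 0 := by
    rw [hGdef]
    apply withDensity_absolutelyContinuous
    rw [Measure.restrict_apply measurableSet_Iic]
    have hempty : Iic (0 : ℝ) ∩ Ioi 0 = ∅ := by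
      ext t
      simp only [mem_inter_iff, mem_Iic, mem_Ioi, mem_empty_iff_false, iff_false, not_and, not_lt]
      exact id
    rw [hempty, measure_empty]
  have hptail : ∀ x, pm G F (Ioi x) = ∫⁻ t in Ioi 0, ENNReal.ofReal (h t) * F (Ioi (x / t)) ∂μ := by
    intro x
    rw [pm_tail G F hG, hGdef, lintegral_withDensity_eq_lintegral_mul _ hhm (meas_tail_div F x)]
    rfl
  have hBr : ∀ c : ℝ, 0 < c → ∀ e : ℝ, 0 < e → ∀ᶠ x in atTop,
      μ (Ioi (c * x)) ≤ ENNReal.ofReal e * H (Ioi x) := by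
    intro c hc e he
    filter_upwards [(hB c hc).eventually_lt_const he] with x hx
    rw [div_lt_iff₀ (hHr x)] at hx
    rw [← ENNReal.toReal_le_toReal (measure_ne_top _ _)
      (ENNReal.mul_ne_top ENNReal.ofReal_ne_top (measure_ne_top _ _)), ENNReal.toReal_mul,
      ENNReal.toReal_ofReal he.le]
    exact hx.le
  have htr : ∀ (H1 H2 : Measure ℝ) [IsFiniteMeasure H1] [IsFiniteMeasure H2] (x e r : ℝ), 0 < e →
      e ≤ 1 / 3 → 3 * e ≤ r →
      (H1 (Ioi x)).toReal * (1 - e) ≤ (1 + e) * (H2 (Ioi x)).toReal →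
      H1 (Ioi x) ≤ (1 + ENNReal.ofReal r) * H2 (Ioi x) := by
    intro H1 H2 _ _ x e r he he3 hr hle
    have hr0 : 0 ≤ r := by linarith
    rw [← ENNReal.ofReal_one, ← ENNReal.ofReal_add zero_le_one hr0,
      ← ENNReal.toReal_le_toReal (measure_ne_top _ _)
      (ENNReal.mul_ne_top ENNReal.ofReal_ne_top (measure_ne_top _ _)), ENNReal.toReal_mul,
      ENNReal.toReal_ofReal (by linarith)]
    have hn : 0 ≤ (H2 (Ioi x)).toReal := ENNReal.toReal_nonneg
    set a := (H1 (Ioi x)).toReal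
    set b := (H2 (Ioi x)).toReal
    have h1 : (1 + e) * b ≤ ((1 + r) * b) * (1 - e) := by
      have : 1 + e ≤ (1 + r) * (1 - e) := by nlinarith
      nlinarith
    exact le_of_mul_le_mul_right (hle.trans h1) (by linarith)
  have hxy : ∀ y0 x t : ℝ, 0 < y0 → 0 < t → ¬ (1 / y0 * x < t) → y0 ≤ x / t := by
    intro y0 x t hy0 ht hn
    push Not at hn
    rw [le_div_iff₀ ht]
    calc y0 * t ≤ y0 * (1 / y0 * x) := by gcongr
      _ = x := by field_simp
  have h1 : ∀ ε : ℝ≥0∞, ε ≠ 0 → ∀ᶠ x in atTop, H (Ioi x) ≤ (1 + ε) * pm G F (Ioi x) := by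
    intro ε hε
    obtain ⟨r, hr, hre⟩ := exists_real hε
    set e : ℝ := min (1 / 3) (r / 3)
    have he : 0 < e := by positivity
    have he3 : e ≤ 1 / 3 := min_le_left _ _
    have her : 3 * e ≤ r := by have : e ≤ r / 3 := min_le_right _ _; linarith
    obtain ⟨y0, hy0, hy⟩ := hbd e he (by linarith)
    filter_upwards [hBr (1 / y0) (by positivity) e he, eventually_ge_atTop 0] with x hx hx0
    have hle : H (Ioi x) ≤ ENNReal.ofReal (1 + e) * pm G F (Ioi x) +
        ENNReal.ofReal e * H (Ioi x) := by
      refine le_trans ?_ (add_le_add_right hx _)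
      refine le_trans ?_ (add_le_add_right (Measure.restrict_le_self (s := Ioi 0) _) _)
      have hpm : Measurable (fun t => ENNReal.ofReal (h t) * F (Ioi (x / t))) :=
        hhm.mul (meas_tail_div F x)
      rw [htail x hx0, hptail x, ← lintegral_const_mul _ hpm,
        ← lintegral_indicator_one measurableSet_Ioi,
        ← lintegral_add_right _ (measurable_one.indicator measurableSet_Ioi)]
      apply lintegral_mono_ae
      filter_upwards [hSr] with t ht
      by_cases hc : 1 / y0 * x < t
      · rw [indicator_of_mem (show t ∈ Ioi (1 / y0 * x) from hc)]
        exact le_trans prob_le_one (by simp)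
      · exact le_trans (hy _ (hxy y0 x t hy0 ht.2 hc) t ht.1).1 le_self_add
    refine (htr H (pm G F) x e r he he3 her ?_).trans (by gcongr)
    have := ENNReal.toReal_mono (by finiteness) hle
    rw [ENNReal.toReal_add (by finiteness) (by finiteness), ENNReal.toReal_mul, ENNReal.toReal_mul,
      ENNReal.toReal_ofReal (by linarith), ENNReal.toReal_ofReal he.le] at this
    linarith
  have h2 : ∀ ε : ℝ≥0∞, ε ≠ 0 → ∀ᶠ x in atTop, pm G F (Ioi x) ≤ (1 + ε) * H (Ioi x) := by
    intro ε hε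
    obtain ⟨r, hr, hre⟩ := exists_real hε
    set e : ℝ := min (1 / 3) (r / 3)
    have he : 0 < e := by positivity
    have he3 : e ≤ 1 / 3 := min_le_left _ _
    have her : 3 * e ≤ r := by have : e ≤ r / 3 := min_le_right _ _; linarith
    obtain ⟨y0, hy0, hy⟩ := hbd e he (by linarith)
    filter_upwards [hBr (1 / y0) (by positivity) (e / C) (by positivity), eventually_ge_atTop 0]
      with x hx hx0
    have hle : ENNReal.ofReal (1 - e) * pm G F (Ioi x) ≤ H (Ioi x) +
        ENNReal.ofReal C * (ENNReal.ofReal (e / C) * H (Ioi x)) := by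
      refine le_trans ?_ (add_le_add_right (mul_le_mul_right hx _) _)
      refine le_trans ?_ (add_le_add_right (mul_le_mul_right
        (Measure.restrict_le_self (s := Ioi 0) _) _) _)
      have hpm : Measurable (fun t => ENNReal.ofReal (h t) * F (Ioi (x / t))) :=
        hhm.mul (meas_tail_div F x)
      rw [htail x hx0, hptail x, ← lintegral_const_mul _ hpm,
        ← lintegral_indicator_const measurableSet_Ioi,
        ← lintegral_add_right _ (measurable_const.indicator measurableSet_Ioi)]
      apply lintegral_mono_ae
      filter_upwards [hSr] with t ht
      by_cases hc : 1 / y0 * x < t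
      · rw [indicator_of_mem (show t ∈ Ioi (1 / y0 * x) from hc)]
        refine le_trans ?_ le_add_self
        calc ENNReal.ofReal (1 - e) * (ENNReal.ofReal (h t) * F (Ioi (x / t)))
            ≤ 1 * (ENNReal.ofReal C * 1) := by
              gcongr
              · exact ENNReal.ofReal_le_one.2 (by linarith)
              · exact hC t ht.1
              · exact prob_le_one
          _ = _ := by simp
      · exact le_trans (hy _ (hxy y0 x t hy0 ht.2 hc) t ht.1).2 le_self_add
    refine (htr (pm G F) H x e r he he3 her ?_).trans (by gcongr)
    have := ENNReal.toReal_mono (by finiteness) hle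
    rw [ENNReal.toReal_add (by finiteness) (by finiteness), ENNReal.toReal_mul, ENNReal.toReal_mul,
      ENNReal.toReal_mul, ENNReal.toReal_ofReal (by linarith),
      ENNReal.toReal_ofReal (by linarith : (0 : ℝ) ≤ C),
      ENNReal.toReal_ofReal (by positivity)] at this
    rw [← mul_assoc, mul_div_cancel₀ _ (by linarith : C ≠ 0)] at this
    linarith
  have hG0 : G (Ioi 0) ≠ 0 := by
    intro h0
    have hz : G = 0 := by
      rw [← Measure.measure_univ_eq_zero, ← Iic_union_Ioi (a := (0 : ℝ))]
      exact measure_union_null hG h0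
    obtain ⟨x, hx⟩ := (h1 1 one_ne_zero).exists
    rw [pm_tail G F hG, hz] at hx
    simp only [lintegral_zero_measure, mul_zero, nonpos_iff_eq_zero] at hx
    exact hHp x hx
  have hBC : BC G (pm G F) := by
    intro c hc ε hε
    obtain ⟨r, hr, hre⟩ := exists_real hε
    have hCpos : 0 < C := by linarith
    filter_upwards [hBr c hc (r / C / 2) (by positivity), h1 1 one_ne_zero] with x hx hx1
    calc G (Ioi (c * x)) ≤ ENNReal.ofReal C * μ (Ioi (c * x)) := hGle _ measurableSet_Ioi
      _ ≤ ENNReal.ofReal C * (ENNReal.ofReal (r / C / 2) * ((1 + 1) * pm G F (Ioi x))) := by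
          gcongr; exact hx.trans (by gcongr)
      _ = (ENNReal.ofReal C * ENNReal.ofReal (r / C / 2) * ENNReal.ofReal 2) * pm G F (Ioi x) := by
          rw [show ENNReal.ofReal 2 = 1 + 1 by norm_num]; ring
      _ = ENNReal.ofReal r * pm G F (Ioi x) := by
          rw [← ENNReal.ofReal_mul hCpos.le, ← ENNReal.ofReal_mul (by positivity)]
          congr 2
          field_simp
      _ ≤ _ := by gcongr
  exact core F G H hF0 hH0 hFp hHp hG hG0 hBC h1 h2

lemma suprA_nonneg (A : Set (Fin d → ℝ)) (z : Fin d → ℝ) : 0 ≤ suprA A z :=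
  Real.sSup_nonneg fun _ hu => hu.1.le

lemma suprA_bdd {A : Set (Fin d → ℝ)} (h0 : (0 : Fin d → ℝ) ∉ closure A) (z : Fin d → ℝ) :
    BddAbove {u : ℝ | 0 < u ∧ z ∈ u • A} := by
  rw [Metric.mem_closure_iff] at h0
  push Not at h0
  obtain ⟨r, hr, h⟩ := h0
  refine ⟨‖z‖ / r, ?_⟩
  rintro u ⟨hu, a, ha, rfl⟩
  have h1 := h a ha
  rw [dist_zero_left] at h1
  rw [le_div_iff₀ hr]
  simp only [norm_smul, Real.norm_eq_abs, abs_of_pos hu]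
  gcongr

lemma lt_suprA_iff {A : Set (Fin d → ℝ)} (h0 : (0 : Fin d → ℝ) ∉ closure A) (z : Fin d → ℝ)
    {x : ℝ} (hx : 0 ≤ x) : x < suprA A z ↔ ∃ u, x < u ∧ z ∈ u • A := by
  constructor
  · intro h
    have hne : {u : ℝ | 0 < u ∧ z ∈ u • A}.Nonempty := by
      by_contra hne
      rw [not_nonempty_iff_eq_empty] at hne
      unfold suprA at h
      rw [hne, Real.sSup_empty] at h
      linarith
    obtain ⟨u, hu, hxu⟩ := exists_lt_of_lt_csSup hne h
    exact ⟨u, hxu, hu.2⟩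
  · rintro ⟨u, hxu, hu⟩
    exact hxu.trans_le (le_csSup (suprA_bdd h0 z) ⟨hx.trans_lt hxu, hu⟩)

lemma suprA_meas {A : Set (Fin d → ℝ)} (hA : IsOpen A) (h0 : (0 : Fin d → ℝ) ∉ closure A) :
    Measurable (suprA A) := by
  apply measurable_of_Ioi
  intro x
  rcases lt_or_ge x 0 with hx | hx
  · have : suprA A ⁻¹' Ioi x = univ := by
      ext z
      simp only [mem_preimage, mem_Ioi, mem_univ, iff_true]
      exact hx.trans_le (suprA_nonneg A z)
    rw [this]
    exact MeasurableSet.univ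
  · have : suprA A ⁻¹' Ioi x = ⋃ u ∈ Ioi x, u • A := by
      ext z
      simp only [mem_preimage, mem_Ioi, mem_iUnion, exists_prop]
      exact lt_suprA_iff h0 z hx
    rw [this]
    exact (isOpen_biUnion fun u hu => hA.smul₀ (hx.trans_lt hu).ne').measurableSet

lemma suprA_smul {A : Set (Fin d → ℝ)} (h0 : (0 : Fin d → ℝ) ∉ closure A) {θ : ℝ} (hθ : 0 ≤ θ)
    (z : Fin d → ℝ) : suprA A (θ • z) = θ * suprA A z := by
  rcases hθ.eq_or_lt with h | h
  · subst h
    have : {u : ℝ | 0 < u ∧ (0 : ℝ) • z ∈ u • A} = ∅ := by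
      apply eq_empty_of_forall_notMem
      rintro u ⟨hu, a, ha, hz⟩
      simp only [zero_smul, smul_eq_zero, hu.ne', false_or] at hz
      subst hz
      exact h0 (subset_closure ha)
    unfold suprA
    rw [this, Real.sSup_empty, zero_mul]
  · have : {u : ℝ | 0 < u ∧ θ • z ∈ u • A} = θ • {u : ℝ | 0 < u ∧ z ∈ u • A} := by
      ext u
      constructor
      · rintro ⟨hu, a, ha, hz⟩
        refine ⟨θ⁻¹ * u, ⟨by positivity, a, ha, ?_⟩, ?_⟩
        · simp only at hz ⊢
          rw [mul_smul, hz, inv_smul_smul₀ h.ne']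
        · simp only [smul_eq_mul]
          field_simp
      · rintro ⟨v, ⟨hv, a, ha, hz⟩, rfl⟩
        refine ⟨mul_pos h hv, a, ha, ?_⟩
        simp only [smul_eq_mul] at hz ⊢
        rw [mul_smul, hz]
    unfold suprA
    rw [this, Real.sSup_smul_of_nonneg hθ, smul_eq_mul]

end Aux

/-- Closure of the classes `𝓒_A, 𝓓_A, (𝓓∩𝓛)_A, 𝓢_A, 𝓛_A, 𝓟𝓓_A,
(𝓓∩𝓟𝓓)_A, 𝓐_A, 𝓣_A, (𝓓∩𝓐)_A` under dependent scale mixtures `Θ X`, under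
Assumptions `CD_A` and `B_A`. -/
theorem statement9 (P : Measure Ω) [IsProbabilityMeasure P]
    (A : Set (Fin d → ℝ)) (hA : IsRSet d A)
    (X : Ω → Fin d → ℝ) (hX : Measurable X)
    (Θ : Ω → ℝ) (hΘ : Measurable Θ) (hΘ0 : ∀ ω, 0 ≤ Θ ω)
    (hΘnd : 0 < P {ω | 0 < Θ ω})
    (h : ℝ → ℝ) (hh : Measurable h) (hhpos : ∀ t, 0 < h t)
    (hCD : CDA P A X Θ h) (hB : BA P A X Θ) :
    (MemC (FA P A X) → MemC (FA P A fun ω => Θ ω • X ω)) ∧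
    (MemD (FA P A X) → MemD (FA P A fun ω => Θ ω • X ω)) ∧
    (MemD (FA P A X) ∧ MemL (FA P A X) →
      MemD (FA P A fun ω => Θ ω • X ω) ∧ MemL (FA P A fun ω => Θ ω • X ω)) ∧
    (MemS (FA P A X) → MemS (FA P A fun ω => Θ ω • X ω)) ∧
    (MemL (FA P A X) → MemL (FA P A fun ω => Θ ω • X ω)) ∧
    (MemPD (FA P A X) → MemPD (FA P A fun ω => Θ ω • X ω)) ∧
    (MemD (FA P A X) ∧ MemPD (FA P A X) →
      MemD (FA P A fun ω => Θ ω • X ω) ∧ MemPD (FA P A fun ω => Θ ω • X ω)) ∧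
    (MemA (FA P A X) → MemA (FA P A fun ω => Θ ω • X ω)) ∧
    (MemT (FA P A X) → MemT (FA P A fun ω => Θ ω • X ω)) ∧
    (MemD (FA P A X) ∧ MemA (FA P A X) →
      MemD (FA P A fun ω => Θ ω • X ω) ∧ MemA (FA P A fun ω => Θ ω • X ω)) := by
  have hm := suprA_meas hA.isOpen hA.zero_notMem_closure
  have hYm : Measurable (fun ω => suprA A (X ω)) := hm.comp hX
  have hμp : IsProbabilityMeasure (P.map Θ) := Measure.isProbabilityMeasure_map hΘ.aemeasurable
  have hFp : IsProbabilityMeasure (FA P A X) := Measure.isProbabilityMeasure_map hYm.aemeasurable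
  have hHm : Measurable (fun ω => Θ ω * suprA A (X ω)) := hΘ.mul hYm
  have hHeq : (FA P A fun ω => Θ ω • X ω) = P.map (fun ω => Θ ω * suprA A (X ω)) := by
    unfold FA
    congr 1
    funext ω
    exact suprA_smul hA.zero_notMem_closure (hΘ0 ω) (X ω)
  rw [hHeq]
  have hHp : IsProbabilityMeasure (P.map (fun ω => Θ ω * suprA A (X ω))) :=
    Measure.isProbabilityMeasure_map hHm.aemeasurable
  have hmm : Measurable (fun p : ℝ × ℝ => p.1 * p.2) := by fun_prop
  obtain ⟨hC, hD, hS, hL, hPD⟩ := mix_main (P.map Θ) (FA P A X)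
    (condDistrib (fun ω => suprA A (X ω)) Θ P)
    (by
      rw [Measure.map_apply hΘ measurableSet_Iio]
      convert measure_empty (μ := P)
      ext ω
      simpa using hΘ0 ω)
    (by
      rw [Measure.map_apply hΘ measurableSet_Ioi]
      exact hΘnd.ne')
    h hh hhpos (measSupport (P.map Θ)) (measSupport_ae _)
    (by
      intro ε hε
      filter_upwards [hCD ε hε] with x hx t ht
      have := hx t ht
      unfold FA
      rw [Measure.map_apply hYm measurableSet_Ioi]
      exact this)
    (P.map (fun ω => Θ ω * suprA A (X ω)))
    (by
      rw [compProd_map_condDistrib hYm.aemeasurable, Measure.map_map hmm (hΘ.prodMk hYm)]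
      rfl)
    (by
      intro c hc
      have := hB c hc
      simp only [Measure.map_apply hΘ measurableSet_Ioi, Measure.map_apply hHm measurableSet_Ioi]
      exact this)
    (by
      unfold FA
      rw [Measure.map_apply hYm measurableSet_Iio]
      convert measure_empty (μ := P)
      ext ω
      simpa using suprA_nonneg A (X ω))
    (by
      rw [Measure.map_apply hHm measurableSet_Iio]
      convert measure_empty (μ := P)
      ext ω
      simpa using mul_nonneg (hΘ0 ω) (suprA_nonneg A (X ω)))
  exact ⟨hC, hD, fun q => ⟨hD q.1, hL q.2⟩, hS, hL, hPD, fun q => ⟨hD q.1, hPD q.2⟩,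
    fun q => ⟨hS q.1, hPD q.2⟩, fun q => ⟨hL q.1, hPD q.2⟩,
    fun q => ⟨hD q.1, hS q.2.1, hPD q.2.2⟩⟩

end Paper
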